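/- arXiv:math/9908069 — 4 statements merged into one kernel-verified Lean document; each statement's English description precedes it below -/
import Mathlib

section
/- In the algebra CP_q^{N−1}, for all 1 ≤ i,k ≤ N one has Σ_{j=1}^{N} q^{−2j} x_ij x_jk = q^{−2} x_ik (equivalently, Σ_{j=1}^{N} q^{2−2j} x_ij x_jk = x_ik); i.e. this relation is implied by the defining relations of CP_q^{N−1}. -/
open scoped BigOperators

noncomputable section

/-- index value in `{1,…,N}` of `i : Fin N` -/
def iv {N : ℕ} (i : Fin N) : ℤ := (i : ℕ) + 1

/-- `pw q m = q ^ m` as a complex number -/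
def pw (q : ℝ) (m : ℤ) : ℂ := (q : ℂ) ^ m

/-- Kronecker delta -/
def kd {N : ℕ} (i j : Fin N) : ℂ := if i = j then 1 else 0

/-- the R-matrix of `SU_q(N)`: entry `R^{ij}_{kl}` -/
def Rmat (q : ℝ) {N : ℕ} (i j k l : Fin N) : ℂ :=
  if i = l ∧ k = j ∧ i ≠ k then 1
  else if i = j ∧ j = k ∧ k = l then (q : ℂ)
  else if i = k ∧ j = l ∧ i < j then (q : ℂ) - (q : ℂ)⁻¹
  else 0

/-- `R⁻ = R - (q - q⁻¹) I` -/
def Rminus (q : ℝ) {N : ℕ} (i j k l : Fin N) : ℂ :=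
  Rmat q i j k l - ((q : ℂ) - (q : ℂ)⁻¹) * (if i = k ∧ j = l then 1 else 0)

def Rc (q : ℝ) {N : ℕ} (i j k l : Fin N) : ℂ := Rmat q l k j i
def Rl (q : ℝ) {N : ℕ} (i j k l : Fin N) : ℂ := pw q (2 * iv l - 2 * iv i) * Rmat q j l i k
def Rr (q : ℝ) {N : ℕ} (i j k l : Fin N) : ℂ := Rmat q k i l j
def Rcm (q : ℝ) {N : ℕ} (i j k l : Fin N) : ℂ := Rminus q l k j i
def Rlm (q : ℝ) {N : ℕ} (i j k l : Fin N) : ℂ := pw q (2 * iv l - 2 * iv i) * Rminus q j l i k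
def Rrm (q : ℝ) {N : ℕ} (i j k l : Fin N) : ℂ := Rminus q k i l j

/-- `RCP^{stuv}_{ijkl} = Σ_{a,b,c} Rlm^{tu}_{ab} R^{sa}_{ic} Rr^{cb}_{jk} δ_{vl}` -/
def RCP (q : ℝ) {N : ℕ} (s t u v i j k l : Fin N) : ℂ :=
  (if v = l then (1 : ℂ) else 0) *
    ∑ a : Fin N, ∑ b : Fin N, ∑ c : Fin N, Rlm q t u a b * Rmat q s a i c * Rr q c b j k

/-- `RCPm^{stuv}_{ijkl} = Σ_{a,b,c} Rlm^{tu}_{ab} R⁻^{sa}_{ic} Rr^{cb}_{jk} δ_{vl}` -/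
def RCPm (q : ℝ) {N : ℕ} (s t u v i j k l : Fin N) : ℂ :=
  (if v = l then (1 : ℂ) else 0) *
    ∑ a : Fin N, ∑ b : Fin N, ∑ c : Fin N, Rlm q t u a b * Rminus q s a i c * Rr q c b j k

/-- `RCPc^{stuv}_{ijkl} = Σ_{a,b,c} Rlm^{tu}_{ab} Rc^{bv}_{cl} Rr^{ac}_{jk} δ_{si}` -/
def RCPc (q : ℝ) {N : ℕ} (s t u v i j k l : Fin N) : ℂ :=
  (if s = i then (1 : ℂ) else 0) *
    ∑ a : Fin N, ∑ b : Fin N, ∑ c : Fin N, Rlm q t u a b * Rc q b v c l * Rr q a c j k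

/-- `RCPcm^{stuv}_{ijkl} = Σ_{a,b,c} Rlm^{tu}_{ab} Rcm^{bv}_{cl} Rr^{ac}_{jk} δ_{si}` -/
def RCPcm (q : ℝ) {N : ℕ} (s t u v i j k l : Fin N) : ℂ :=
  (if s = i then (1 : ℂ) else 0) *
    ∑ a : Fin N, ∑ b : Fin N, ∑ c : Fin N, Rlm q t u a b * Rcm q b v c l * Rr q a c j k

/-- `s+ = Σ_{i=0}^{N-1} q^{2i}` -/
def sP (q : ℝ) (N : ℕ) : ℂ := ∑ i ∈ Finset.range N, (q : ℂ) ^ (2 * i)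
/-- `s'+ = s+ - 1` -/
def s1P (q : ℝ) (N : ℕ) : ℂ := sP q N - 1
/-- `s''+ = s'+ - q²` -/
def s2P (q : ℝ) (N : ℕ) : ℂ := s1P q N - (q : ℂ) ^ 2
/-- `s''''+ = s''+ - q⁴ - q⁶` -/
def s4P (q : ℝ) (N : ℕ) : ℂ := s2P q N - (q : ℂ) ^ 4 - (q : ℂ) ^ 6

/-- the free algebra on the `N²` generators `x_ij` -/
abbrev FA (N : ℕ) := FreeAlgebra ℂ (Fin N × Fin N)

/-- the generator `x_ij` of the free algebra -/
def gen {N : ℕ} (i j : Fin N) : FA N := FreeAlgebra.ι ℂ (i, j)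

/-- the defining relations of quantum projective space -/
inductive CPrel (q : ℝ) (N : ℕ) : FA N → FA N → Prop
  | relm (i j k l : Fin N) :
      CPrel q N
        (∑ s : Fin N, ∑ t : Fin N, ∑ u : Fin N, ∑ v : Fin N,
          RCPm q s t u v i j k l • (gen s t * gen u v))
        ((q : ℂ)⁻¹ • (gen i j * gen k l))
  | relc (i j k l : Fin N) :
      CPrel q N
        (∑ s : Fin N, ∑ t : Fin N, ∑ u : Fin N, ∑ v : Fin N,
          RCPc q s t u v i j k l • (gen s t * gen u v))
        ((q : ℂ) • (gen i j * gen k l))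
  | relu : CPrel q N (∑ i : Fin N, gen i i) 1

/-- quantum projective space `CP_q^{N-1}`: the quotient of the free algebra by the
two-sided ideal generated by the defining relations -/
abbrev CPq (q : ℝ) (N : ℕ) := RingQuot (CPrel q N)

/-- the generator `x_ij` of `CP_q^{N-1}` -/
def X (q : ℝ) {N : ℕ} (i j : Fin N) : CPq q N :=
  RingQuot.mkAlgHom ℂ (CPrel q N) (gen i j)

/-- a first order differential calculus on a unital ℂ-algebra `A`:
a bimodule `Γ`, a ℂ-linear `d` satisfying the Leibniz rule, with `Γ = Lin{a·db}` -/
structure FODC (A : Type) [Ring A] [Algebra ℂ A] where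
  Γ : Type
  [grp : AddCommGroup Γ]
  [modC : Module ℂ Γ]
  [modL : Module A Γ]
  [modR : Module Aᵐᵒᵖ Γ]
  [smulComm : SMulCommClass A Aᵐᵒᵖ Γ]
  [towerL : IsScalarTower ℂ A Γ]
  [towerR : IsScalarTower ℂ Aᵐᵒᵖ Γ]
  d : A → Γ
  d_add : ∀ a b : A, d (a + b) = d a + d b
  d_smul : ∀ (c : ℂ) (a : A), d (c • a) = c • d a
  leibniz : ∀ a b : A, d (a * b) = MulOpposite.op b • d a + a • d b
  spanning : Submodule.span ℂ {z : Γ | ∃ a b : A, z = a • d b} = ⊤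

attribute [instance] FODC.grp FODC.modC FODC.modL FODC.modR FODC.smulComm
attribute [instance] FODC.towerL FODC.towerR

/-- the invariant one-form `⍵ = Σ_{i,j} q^{-2j} x_ij · d x_ji` -/
def om (q : ℝ) {N : ℕ} (D : FODC (CPq q N)) : D.Γ :=
  ∑ i : Fin N, ∑ j : Fin N, pw q (-2 * iv j) • (X q i j • D.d (X q j i))

/-- the free left `CP_q^{N-1}`-module on `N²` symbols `e_ij` -/
abbrev FMod (q : ℝ) (N : ℕ) := Fin N × Fin N → CPq q N

/-- the standard generator `e_ij` of the free module -/
def e (q : ℝ) {N : ℕ} (i j : Fin N) : FMod q N := Pi.single (i, j) 1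

/-- `ω̂ = Σ_{k,l} q^{-2l} x_kl e_lk` in the free module -/
def omHat (q : ℝ) (N : ℕ) : FMod q N :=
  ∑ k : Fin N, ∑ l : Fin N, pw q (-2 * iv l) • (X q k l • e q l k)

/-- the left-module map `π : F → Γ` with `π(e_ij) = d x_ij` -/
def piMap (q : ℝ) {N : ℕ} (D : FODC (CPq q N)) : FMod q N → D.Γ :=
  fun f => ∑ p : Fin N × Fin N, f p • D.d (X q p.1 p.2)

/-- `ρ_ij = e_ij - A Σ_s q^{-2s} x_is e_sj - B Σ Rlm^{tu}_{bc} R⁻^{sb}_{ia} Rc^{cv}_{aj} x_st e_uv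
  - C x_ij ω̂ - E q^{2j} δ_ij ω̂` -/
def rho (q : ℝ) {N : ℕ} (A B C E : ℂ) (i j : Fin N) : FMod q N :=
  e q i j
    - A • (∑ s : Fin N, pw q (-2 * iv s) • (X q i s • e q s j))
    - B • (∑ a : Fin N, ∑ b : Fin N, ∑ c : Fin N, ∑ s : Fin N, ∑ t : Fin N, ∑ u : Fin N,
        ∑ v : Fin N, (Rlm q t u b c * Rminus q s b i a * Rc q c v a j) • (X q s t • e q u v))
    - C • (X q i j • omHat q N)
    - (E * pw q (2 * iv j) * kd i j) • omHat q N

/-- `ρ'_ij = e_ij - A Σ_s q^{-2s} x_is e_sj - B Σ Rlm^{tu}_{bc} R⁻^{sb}_{ia} Rc^{cv}_{aj} x_st e_uv` -/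
def rho' (q : ℝ) {N : ℕ} (A B : ℂ) (i j : Fin N) : FMod q N :=
  e q i j
    - A • (∑ s : Fin N, pw q (-2 * iv s) • (X q i s • e q s j))
    - B • (∑ a : Fin N, ∑ b : Fin N, ∑ c : Fin N, ∑ s : Fin N, ∑ t : Fin N, ∑ u : Fin N,
        ∑ v : Fin N, (Rlm q t u b c * Rminus q s b i a * Rc q c v a j) • (X q s t • e q u v))

/-- the one-forms `τ_ij` generating the sub-bimodule which is factored out
to pass from the calculus of Thm 2(1) to the restricted calculus -/
def tau (q : ℝ) {N : ℕ} (D : FODC (CPq q N)) (i j : Fin N) : D.Γ :=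
  D.d (X q i j)
    - (q : ℂ) ^ 2 • (∑ s : Fin N, pw q (-2 * iv s) • (X q i s • D.d (X q s j)))
    - (q : ℂ)⁻¹ • (∑ a : Fin N, ∑ b : Fin N, ∑ c : Fin N, ∑ s : Fin N, ∑ t : Fin N, ∑ u : Fin N,
        ∑ v : Fin N, (Rlm q t u b c * Rminus q s b i a * Rc q c v a j) • (X q s t • D.d (X q u v)))
    + (s2P q N / s1P q N) • (X q i j • om q D)
    + ((1 / s1P q N) * pw q (2 * iv j) * kd i j) • om q D

/-- the index set `{(i,j) : (i,j) ≠ (N,N)}` -/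
abbrev FreeIdx (N : ℕ) := {p : Fin N × Fin N // ¬((p.1 : ℕ) = N - 1 ∧ (p.2 : ℕ) = N - 1)}

/-- `{d x_ij : (i,j) ≠ (N,N)}` is a basis of `Γ` as a left `CP_q^{N-1}`-module -/
def HasFreeBasis (q : ℝ) {N : ℕ} (D : FODC (CPq q N)) : Prop :=
  LinearIndependent (CPq q N) (fun p : FreeIdx N => D.d (X q p.1.1 p.1.2)) ∧
    Submodule.span (CPq q N) (Set.range fun p : FreeIdx N => D.d (X q p.1.1 p.1.2)) = ⊤



lemma Rminus_eq (q : ℝ) {N : ℕ} (s a i c : Fin N) :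
    Rminus q s a i c =
      (if i = a then (if c = s then (if s = a then (0 : ℂ) else 1) else 0) else 0) +
      (if i = s then (if c = a then (if s = a then (q : ℂ)⁻¹ else
        if a < s then -((q : ℂ) - (q : ℂ)⁻¹) else 0) else 0) else 0) := by
  unfold Rminus Rmat
  split_ifs <;> grind

lemma Rinv (q : ℝ) (hq0 : q ≠ 0) {N : ℕ} (s a k b : Fin N) :
    ∑ i : Fin N, ∑ c : Fin N, Rminus q s a i c * Rmat q i c k b =
      if s = k then (if a = b then 1 else 0) else 0 := by
  have hq : (q : ℂ) ≠ 0 := by exact_mod_cast hq0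
  simp only [Rminus_eq, add_mul, ite_mul, zero_mul, Finset.sum_add_distrib,
    Finset.sum_ite_irrel, Finset.sum_const_zero, Finset.sum_ite_eq', Finset.sum_ite_eq,
    Finset.mem_univ, if_true, one_mul]
  unfold Rmat
  rcases lt_trichotomy s a with h | h | h
  · split_ifs <;> grind
  · subst h
    split_ifs <;> grind
  · split_ifs <;> grind

lemma sum_aux (q : ℂ) (hq : q ≠ 0) (N t : ℕ) (ht : t < N) :
    ∑ c ∈ Finset.range N, q ^ (2 * c) * (if c = t then q⁻¹ else if c < t then -(q - q⁻¹) else 0)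
      = q⁻¹ := by
  have h1 : ∀ t : ℕ, ∑ c ∈ Finset.range (t + 1),
      q ^ (2 * c) * (if c = t then q⁻¹ else if c < t then -(q - q⁻¹) else 0) = q⁻¹ := by
    intro t
    rw [Finset.sum_range_succ]
    have h2 : ∀ t : ℕ, ∑ c ∈ Finset.range t, q ^ (2 * c) * (-(q - q⁻¹)) = 
        q⁻¹ - q ^ (2 * t) * q⁻¹ := by
      intro t
      induction t with
      | zero => simp
      | succ n ih =>
        rw [Finset.sum_range_succ, ih]
        field_simp
        ring
    rw [Finset.sum_congr rfl (g := fun c => q ^ (2 * c) * (-(q - q⁻¹))), h2]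
    · simp
    · intro c hc
      have := Finset.mem_range.1 hc
      simp [this, this.ne]
  refine Eq.trans ?_ (h1 t)
  symm
  apply Finset.sum_subset
  · intro c hc
    simp only [Finset.mem_range] at *
    omega
  · intro c _ hc
    simp only [Finset.mem_range] at *
    rw [if_neg (by omega), if_neg (by omega), mul_zero]

lemma Rlm_tr (q : ℝ) (hq0 : q ≠ 0) {N : ℕ} (t u : Fin N) :
    ∑ a : Fin N, Rlm q t u a a = if u = t then (q : ℂ) * pw q (-2 * iv t) else 0 := by
  have hq : (q : ℂ) ≠ 0 := by exact_mod_cast hq0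
  unfold Rlm
  by_cases h : u = t
  · subst h
    rw [if_pos rfl]
    have key := sum_aux (q : ℂ) hq N u u.2
    rw [← Fin.sum_univ_eq_sum_range (fun c => (q : ℂ) ^ (2 * c) * (if c = (u : ℕ) then (q : ℂ)⁻¹
      else if c < (u : ℕ) then -((q : ℂ) - (q : ℂ)⁻¹) else 0))] at key
    have e : (q : ℂ) * pw q (-2 * iv u) = pw q (2 - 2 * iv u) * (q : ℂ)⁻¹ := by
      unfold pw
      rw [show (2 - 2 * iv u : ℤ) = -2 * iv u + 1 + 1 by ring, zpow_add_one₀ hq, zpow_add_one₀ hq]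
      field_simp
    rw [e, ← key, Finset.mul_sum]
    refine Finset.sum_congr rfl fun c _ => ?_
    have e2 : pw q (2 * iv c - 2 * iv u) = pw q (2 - 2 * iv u) * (q : ℂ) ^ (2 * (c : ℕ)) := by
      unfold pw
      rw [← zpow_natCast, ← zpow_add₀ hq]
      congr 1
      unfold iv
      push_cast
      ring
    rw [e2, mul_assoc]
    congr 2
    rw [Rminus_eq]
    simp only [← Fin.ext_iff, Fin.val_fin_lt]
    split_ifs <;> grind
  · rw [if_neg h]
    refine Finset.sum_eq_zero fun a _ => ?_
    rw [Rminus_eq]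
    have h' : t ≠ u := fun e => h e.symm
    split_ifs <;> grind

lemma RCPm_tr (q : ℝ) (hq0 : q ≠ 0) {N : ℕ} (s t u v k l : Fin N) :
    ∑ i : Fin N, RCPm q s t u v i i k l =
      if v = l then (if s = k then (if u = t then (q : ℂ) * pw q (-2 * iv t) else 0) else 0)
        else 0 := by
  unfold RCPm
  rw [← Finset.mul_sum]
  split_ifs with hv hs hu
  all_goals try rw [zero_mul]
  all_goals
    rw [one_mul, Finset.sum_comm]
    have : ∀ a : Fin N, ∑ i : Fin N, ∑ b : Fin N, ∑ c : Fin N,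
        Rlm q t u a b * Rminus q s a i c * Rr q c b i k =
        if s = k then Rlm q t u a a else 0 := by
      intro a
      rw [Finset.sum_comm]
      have h2 : ∀ b : Fin N, ∑ i : Fin N, ∑ c : Fin N,
        Rlm q t u a b * Rminus q s a i c * Rr q c b i k =
          Rlm q t u a b * if s = k then (if a = b then 1 else 0) else 0 := by
        intro b
        rw [← Rinv q hq0 s a k b]
        simp only [Finset.mul_sum, mul_assoc, Rr]
      simp only [h2]
      split_ifs <;> simp
    simp only [this]
  · rw [← if_pos (c := u = t) (t := (q : ℂ) * pw q (-2 * iv t)) (e := 0) hu, ← Rlm_tr q hq0]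
    simp [hs]
  · simp [hs, Rlm_tr q hq0, hu]
  · simp [hs]

/-- `Σ_j q^{-2j} x_ij x_jk = q^{-2} x_ik` holds in `CP_q^{N-1}`. -/
theorem statement1 (q : ℝ) (hq0 : q ≠ 0) (hq1 : q ≠ 1) (hq2 : q ≠ -1) (N : ℕ) (hN : 2 ≤ N) (i k : Fin N) :
    (∑ j : Fin N, pw q (-2 * iv j) • (X q i j * X q j k)) = pw q (-2) • X q i k := by
  have hq : (q : ℂ) ≠ 0 := by exact_mod_cast hq0
  have hu : ∑ i : Fin N, X q i i = (1 : CPq q N) := by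
    have := RingQuot.mkAlgHom_rel ℂ (CPrel.relu (q := q) (N := N))
    simpa [X] using this
  have hm : ∀ i j k l : Fin N, ∑ s : Fin N, ∑ t : Fin N, ∑ u : Fin N, ∑ v : Fin N,
      RCPm q s t u v i j k l • (X q s t * X q u v) = (q : ℂ)⁻¹ • (X q i j * X q k l) := by
    intro i j k l
    have := RingQuot.mkAlgHom_rel ℂ (CPrel.relm (q := q) i j k l)
    simpa only [X, map_sum, map_smul, map_mul] using this
  have h1 : (q : ℂ)⁻¹ • X q i k = (q : ℂ) • ∑ j : Fin N, pw q (-2 * iv j) • (X q i j * X q j k) := by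
    calc (q : ℂ)⁻¹ • X q i k = ∑ j : Fin N, (q : ℂ)⁻¹ • (X q j j * X q i k) := by
          rw [← Finset.smul_sum, ← Finset.sum_mul, hu, one_mul]
      _ = ∑ j : Fin N, ∑ s : Fin N, ∑ t : Fin N, ∑ u : Fin N, ∑ v : Fin N,
            RCPm q s t u v j j i k • (X q s t * X q u v) := by
          simp only [hm]
      _ = ∑ s : Fin N, ∑ t : Fin N, ∑ u : Fin N, ∑ v : Fin N,
            (∑ j : Fin N, RCPm q s t u v j j i k) • (X q s t * X q u v) := by
          rw [Finset.sum_comm]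
          refine Finset.sum_congr rfl fun s _ => ?_
          rw [Finset.sum_comm]
          refine Finset.sum_congr rfl fun t _ => ?_
          rw [Finset.sum_comm]
          refine Finset.sum_congr rfl fun u _ => ?_
          rw [Finset.sum_comm]
          refine Finset.sum_congr rfl fun v _ => ?_
          rw [Finset.sum_smul]
      _ = _ := by
          simp only [RCPm_tr q hq0, ite_smul, zero_smul, Finset.sum_ite_irrel,
            Finset.sum_const_zero, Finset.sum_ite_eq', Finset.sum_ite_eq, Finset.mem_univ, if_true,
            Finset.smul_sum, smul_smul]
  have h2 : pw q (-2) = (q : ℂ)⁻¹ * (q : ℂ)⁻¹ := by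
    unfold pw
    rw [show (-2 : ℤ) = -1 + -1 by norm_num, zpow_add₀ hq, zpow_neg_one]
  rw [h2, mul_smul, h1, smul_smul, inv_mul_cancel₀ hq, one_smul]
end
end

section
/- The algebra CP_q^{N−1} admits a *-structure with (x_ij)* = x_ji: there exists a map * : CP_q^{N−1} → CP_q^{N−1} which is conjugate-linear, involutive ((a*)* = a), anti-multiplicative ((ab)* = b* a*), unital (1* = 1), and satisfies (x_ij)* = x_ji for all 1 ≤ i,j ≤ N. -/
open scoped BigOperators

noncomputable section

open MulOpposite

section Aux

variable {q : ℝ} {N : ℕ}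

theorem Rmat_symm (i j k l : Fin N) : Rmat q i j k l = Rmat q k l i j := by
  unfold Rmat; grind

theorem Rminus_symm (i j k l : Fin N) : Rminus q i j k l = Rminus q k l i j := by
  unfold Rminus; rw [Rmat_symm]; grind

theorem Rminus_supp (i j k l : Fin N) (h : Rminus q i j k l ≠ 0) :
    (i = l ∧ j = k) ∨ (i = k ∧ j = l) := by
  unfold Rminus Rmat at h; grind

theorem Rlm_flip (t u a b : Fin N) : Rlm q u t b a = Rlm q t u a b := by
  unfold Rlm
  rw [Rminus_symm u b t a]
  by_cases h : Rminus q t a u b = 0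
  · rw [h]; simp
  · rcases Rminus_supp _ _ _ _ h with ⟨rfl, rfl⟩ | ⟨rfl, rfl⟩ <;> simp

theorem Rr_flip (i j k l : Fin N) : Rr q j i l k = Rr q i j k l := by
  unfold Rr; rw [Rmat_symm]

/-- telescoping sum -/
theorem tele (hq0 : q ≠ 0) (j u : ℕ) (h : j < u) :
    ((q : ℂ) - (q : ℂ)⁻¹) * ∑ b ∈ Finset.Ioo j u, (q : ℂ) ^ (2 * b)
      = (q : ℂ) ^ (2 * u) * (q : ℂ)⁻¹ - (q : ℂ) ^ (2 * j) * q := by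
  have hq : (q : ℂ) ≠ 0 := by exact_mod_cast hq0
  induction u, h using Nat.le_induction with
  | base =>
    have : Finset.Ioo j (j+1) = ∅ := by ext; simp
    rw [this]; field_simp; simp; ring
  | succ n hn ih =>
    have : Finset.Ioo j (n+1) = insert n (Finset.Ioo j n) := by ext; simp; omega
    rw [this, Finset.sum_insert (by simp), mul_add, ih]
    field_simp; ring

theorem Rlm_ne (t u a b : Fin N) (h : t ≠ u) :
    Rlm q t u a b = if a = u then (if b = t then 1 else 0) else 0 := by
  by_cases hab : a = u ∧ b = t
  · obtain ⟨rfl, rfl⟩ := hab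
    simp [Rlm, Rminus, Rmat, pw, h.symm]
  · have : Rminus q u b t a = 0 := by
      unfold Rminus Rmat; grind
    unfold Rlm; rw [this]; grind

theorem Rlm_same (u a b : Fin N) :
    Rlm q u u a b = if b = a then pw q (2 * iv b - 2 * iv u) *
      (if b = u then (q : ℂ)⁻¹ else if b < u then - ((q : ℂ) - (q : ℂ)⁻¹) else 0) else 0 := by
  unfold Rlm Rminus Rmat
  split_ifs <;> first | ring1 | grind

theorem Rr_same (b j k : Fin N) :
    Rr q b b j k = if j = k then
      (if j = b then (q : ℂ) else if j < b then (q : ℂ) - (q : ℂ)⁻¹ else 0) else 0 := by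
  unfold Rr Rmat; grind

theorem sum_fin (j u : Fin N) :
    ∑ b : Fin N, (if j < b ∧ b < u then (q : ℂ) ^ (2 * (b : ℕ)) else 0)
      = ∑ b ∈ Finset.Ioo (j : ℕ) u, (q : ℂ) ^ (2 * b) := by
  have := Fin.sum_univ_eq_sum_range
    (fun b => if (j : ℕ) < b ∧ b < (u : ℕ) then (q : ℂ) ^ (2 * b) else 0) N
  simp only [Fin.lt_def]
  rw [this, ← Finset.sum_filter]
  congr 1
  ext x
  have := u.2
  simp
  omega

theorem Rlm_Rr (hq0 : q ≠ 0) (t u j k : Fin N) :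
    ∑ a : Fin N, ∑ b : Fin N, Rlm q t u a b * Rr q a b j k
      = if t = j ∧ u = k then 1 else 0 := by
  have hq : (q : ℂ) ≠ 0 := by exact_mod_cast hq0
  by_cases htu : t = u
  · subst htu
    simp only [Rlm_same, ite_mul, zero_mul, Finset.sum_ite_eq', Finset.mem_univ, if_true, Rr_same]
    by_cases hjk : j = k
    · subst hjk
      simp only [if_true, and_self]
      have hpw : ∀ b : Fin N, pw q (2 * iv b - 2 * iv t)
          = (q : ℂ) ^ (2 * (b : ℕ)) * ((q : ℂ) ^ (2 * (t : ℕ)))⁻¹ := by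
        intro b
        have : 2 * iv b - 2 * iv t = ((2 * (b : ℕ) : ℕ) : ℤ) - ((2 * (t : ℕ) : ℕ) : ℤ) := by
          unfold iv; push_cast; ring
        rw [pw, this, zpow_sub₀ hq, zpow_natCast, zpow_natCast, div_eq_mul_inv]
      rcases lt_trichotomy j t with h | h | h
      · have key : ∀ b : Fin N, pw q (2 * iv b - 2 * iv t) *
            (if b = t then (q : ℂ)⁻¹ else if b < t then - ((q : ℂ) - (q : ℂ)⁻¹) else 0) *
            (if j = b then (q : ℂ) else if j < b then (q : ℂ) - (q : ℂ)⁻¹ else 0)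
            = (if b = t then (q : ℂ)⁻¹ * ((q : ℂ) - (q : ℂ)⁻¹) else 0)
            + (if b = j then - ((q : ℂ) ^ (2 * (j : ℕ)) * ((q : ℂ) ^ (2 * (t : ℕ)))⁻¹ *
                ((q : ℂ) - (q : ℂ)⁻¹) * q) else 0)
            + (- (((q : ℂ) ^ (2 * (t : ℕ)))⁻¹ * ((q : ℂ) - (q : ℂ)⁻¹) * ((q : ℂ) - (q : ℂ)⁻¹))) *
              (if j < b ∧ b < t then (q : ℂ) ^ (2 * (b : ℕ)) else 0) := by
          intro b
          rw [hpw]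
          rcases lt_trichotomy b t with hb | hb | hb
          · rcases lt_trichotomy j b with hj | hj | hj
            · simp [hb, hj, hb.ne, hj.ne, hj.ne']; ring
            · subst hj; simp [hb, hb.ne]; ring
            · simp [hb, hb.ne, hj.ne, hj.ne', hj.not_gt]
          · subst hb; simp [h, h.ne, h.ne']
            left; field_simp
          · have := h.trans hb
            simp [hb.ne', hb.not_gt, this.ne']
        simp only [key, Finset.sum_add_distrib, ← Finset.mul_sum, Finset.sum_ite_eq',
          Finset.mem_univ, if_true, sum_fin, h.ne', if_false]
        have ht := tele hq0 (j : ℕ) (t : ℕ) h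
        have hp : (q : ℂ) ^ (2 * (t : ℕ)) * ((q : ℂ) ^ (2 * (t : ℕ)))⁻¹ = 1 :=
          mul_inv_cancel₀ (pow_ne_zero _ hq)
        linear_combination (- (((q : ℂ) ^ (2 * (t : ℕ)))⁻¹ * ((q : ℂ) - (q : ℂ)⁻¹))) * ht
          - ((q : ℂ) - (q : ℂ)⁻¹) * (q : ℂ)⁻¹ * hp
      · subst h
        rw [Finset.sum_eq_single j]
        · simp [hq, pw]
        · intro b _ hb
          rcases lt_or_gt_of_ne hb with h' | h'
          · simp [hb.symm, h'.not_gt]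
          · simp [hb, h'.not_gt]
        · simp
      · rw [if_neg h.ne]
        refine Finset.sum_eq_zero fun b _ => ?_
        split_ifs <;> first | (exfalso; omega) | simp
    · simp [hjk]; grind
  · simp only [Rlm_ne t u _ _ htu, ite_mul, zero_mul, one_mul]
    rw [Finset.sum_eq_single u]
    · simp only [if_true, Finset.sum_ite_eq', Finset.mem_univ]
      unfold Rr Rmat; grind
    · intro b _ hb; simp [hb]
    · simp

theorem RCP_eq (hq0 : q ≠ 0) (s t u v i j k l : Fin N) :
    RCP q s t u v i j k l = RCPm q s t u v i j k l
      + ((q : ℂ) - (q : ℂ)⁻¹) * (if s = i ∧ t = j ∧ u = k ∧ v = l then 1 else 0) := by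
  have h : ∀ a b c, Rlm q t u a b * Rmat q s a i c * Rr q c b j k
      = Rlm q t u a b * Rminus q s a i c * Rr q c b j k
        + ((q : ℂ) - (q : ℂ)⁻¹) * (if s = i then 1 else 0) *
          (if a = c then Rlm q t u a b * Rr q c b j k else 0) := by
    intro a b c
    unfold Rminus
    split_ifs <;> first | ring1 | grind
  unfold RCP RCPm
  simp only [h, Finset.sum_add_distrib, ← Finset.mul_sum, Finset.sum_ite_eq, Finset.mem_univ,
    if_true, Rlm_Rr hq0]
  split_ifs <;> first | ring1 | grind

theorem RCPm_flip (s t u v i j k l : Fin N) :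
    RCPm q v u t s l k j i = RCPcm q s t u v i j k l := by
  unfold RCPm RCPcm
  congr 1
  rw [Finset.sum_comm]
  refine Finset.sum_congr rfl fun a _ => Finset.sum_congr rfl fun b _ =>
    Finset.sum_congr rfl fun c _ => ?_
  rw [Rlm_flip, Rr_flip]
  unfold Rcm
  rw [Rminus_symm]

theorem RCPc_flip (s t u v i j k l : Fin N) :
    RCPc q v u t s l k j i = RCP q s t u v i j k l := by
  unfold RCP RCPc
  congr 1
  rw [Finset.sum_comm]
  refine Finset.sum_congr rfl fun a _ => Finset.sum_congr rfl fun b _ =>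
    Finset.sum_congr rfl fun c _ => ?_
  rw [Rlm_flip, Rr_flip]
  unfold Rc
  rw [Rmat_symm]

theorem RCP_conj (s t u v i j k l : Fin N) :
    (starRingEnd ℂ) (RCPc q s t u v i j k l) = RCPc q s t u v i j k l := by
  unfold RCPc Rlm Rc Rr Rminus Rmat pw
  simp [apply_ite (starRingEnd ℂ)]

theorem RCPm_conj (s t u v i j k l : Fin N) :
    (starRingEnd ℂ) (RCPm q s t u v i j k l) = RCPm q s t u v i j k l := by
  unfold RCPm Rlm Rr Rminus Rmat pw
  simp [apply_ite (starRingEnd ℂ)]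

theorem RCPc_eq (hq0 : q ≠ 0) (s t u v i j k l : Fin N) :
    RCPc q s t u v i j k l = RCPcm q s t u v i j k l
      + ((q : ℂ) - (q : ℂ)⁻¹) * (if s = i ∧ t = j ∧ u = k ∧ v = l then 1 else 0) := by
  rw [RCPc_flip v u t s l k j i, RCP_eq hq0, RCPm_flip]
  grind

theorem X_rel_m (i j k l : Fin N) :
    ∑ s : Fin N, ∑ t : Fin N, ∑ u : Fin N, ∑ v : Fin N,
      RCPm q s t u v i j k l • (X q s t * X q u v) = (q : ℂ)⁻¹ • (X q i j * X q k l) := by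
  have := RingQuot.mkAlgHom_rel ℂ (CPrel.relm (q := q) i j k l)
  simpa [X] using this

theorem X_rel_c (i j k l : Fin N) :
    ∑ s : Fin N, ∑ t : Fin N, ∑ u : Fin N, ∑ v : Fin N,
      RCPc q s t u v i j k l • (X q s t * X q u v) = (q : ℂ) • (X q i j * X q k l) := by
  have := RingQuot.mkAlgHom_rel ℂ (CPrel.relc (q := q) i j k l)
  simp only [map_sum, map_smul, map_mul] at this
  exact this

theorem X_rel_u : ∑ i : Fin N, X q i i = 1 := by
  have := RingQuot.mkAlgHom_rel ℂ (CPrel.relu (q := q) (N := N))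
  simpa [X] using this

theorem sum_delta (z : ℂ) (i j k l : Fin N) :
    ∑ s : Fin N, ∑ t : Fin N, ∑ u : Fin N, ∑ v : Fin N,
      (z * (if s = i ∧ t = j ∧ u = k ∧ v = l then 1 else 0)) • (X q s t * X q u v)
      = z • (X q i j * X q k l) := by
  simp [ite_and, ite_smul]

theorem X_rel (hq0 : q ≠ 0) (i j k l : Fin N) :
    ∑ s : Fin N, ∑ t : Fin N, ∑ u : Fin N, ∑ v : Fin N,
      RCP q s t u v i j k l • (X q s t * X q u v) = (q : ℂ) • (X q i j * X q k l) := by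
  simp only [RCP_eq hq0, add_smul, Finset.sum_add_distrib, X_rel_m, sum_delta]
  rw [← add_smul]; congr 1; ring

theorem X_rel_cm (hq0 : q ≠ 0) (i j k l : Fin N) :
    ∑ s : Fin N, ∑ t : Fin N, ∑ u : Fin N, ∑ v : Fin N,
      RCPcm q s t u v i j k l • (X q s t * X q u v) = (q : ℂ)⁻¹ • (X q i j * X q k l) := by
  have h := X_rel_c (q := q) i j k l
  simp only [RCPc_eq hq0, add_smul, Finset.sum_add_distrib, sum_delta] at h
  refine add_right_cancel (h.trans ?_)
  rw [← add_smul]; congr 1; ring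

theorem sum_rev {M : Type*} [AddCommMonoid M] (f : Fin N → Fin N → Fin N → Fin N → M) :
    ∑ s, ∑ t, ∑ u, ∑ v, f s t u v = ∑ s, ∑ t, ∑ u, ∑ v, f v u t s := by
  calc _ = ∑ x : ((Fin N × Fin N) × Fin N) × Fin N, f x.1.1.1 x.1.1.2 x.1.2 x.2 := by
        simp only [Fintype.sum_prod_type]
    _ = ∑ x : ((Fin N × Fin N) × Fin N) × Fin N, f x.2 x.1.2 x.1.1.2 x.1.1.1 := by
        refine Fintype.sum_equiv ⟨fun x => (((x.2, x.1.2), x.1.1.2), x.1.1.1),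
          fun x => (((x.2, x.1.2), x.1.1.2), x.1.1.1), fun _ => rfl, fun _ => rfl⟩ _ _ ?_
        intro x; rfl
    _ = _ := by simp only [Fintype.sum_prod_type]

end Aux

/-- The opposite algebra with conjugate scalar action. -/
def CPbar (q : ℝ) (N : ℕ) : Type := (CPq q N)ᵐᵒᵖ

instance CPbar.ring (q : ℝ) (N : ℕ) : Ring (CPbar q N) :=
  inferInstanceAs (Ring (CPq q N)ᵐᵒᵖ)

instance CPbar.algebra (q : ℝ) (N : ℕ) : Algebra ℂ (CPbar q N) :=
  ((algebraMap ℂ (CPq q N)ᵐᵒᵖ).comp (starRingEnd ℂ)).toAlgebra'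
    (fun c x => Algebra.commutes (A := (CPq q N)ᵐᵒᵖ) ((starRingEnd ℂ) c) x)

/-- identity map to the conjugate opposite -/
def toBar {q : ℝ} {N : ℕ} : CPq q N →+ CPbar q N where
  toFun a := (op a : (CPq q N)ᵐᵒᵖ)
  map_zero' := rfl
  map_add' _ _ := rfl

/-- identity map from the conjugate opposite -/
def ofBar {q : ℝ} {N : ℕ} : CPbar q N →+ CPq q N where
  toFun a := unop (show (CPq q N)ᵐᵒᵖ from a)
  map_zero' := rfl
  map_add' _ _ := rfl

section Aux2

variable {q : ℝ} {N : ℕ}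

theorem of_to (a : CPq q N) : ofBar (toBar a) = a := rfl
theorem toBar_mul (a b : CPq q N) : toBar a * toBar b = toBar (b * a) := rfl
theorem toBar_one : toBar (1 : CPq q N) = 1 := rfl
theorem ofBar_mul (a b : CPbar q N) : ofBar (a * b) = ofBar b * ofBar a := rfl

theorem ofBar_algebraMap (z : ℂ) :
    ofBar (algebraMap ℂ (CPbar q N) z) = algebraMap ℂ (CPq q N) ((starRingEnd ℂ) z) := rfl

theorem ofBar_smul (z : ℂ) (a : CPbar q N) : ofBar (z • a) = (starRingEnd ℂ) z • ofBar a := by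
  rw [Algebra.smul_def, ofBar_mul, ofBar_algebraMap, ← Algebra.commutes, ← Algebra.smul_def]

theorem smul_toBar (z : ℂ) (a : CPq q N) : z • toBar a = toBar ((starRingEnd ℂ) z • a) := by
  have : ∀ x : CPbar q N, toBar (ofBar x) = x := fun _ => rfl
  rw [← this (z • toBar a), ofBar_smul, of_to]

/-- the star map on the free algebra -/
def stFree (q : ℝ) (N : ℕ) : FA N →ₐ[ℂ] CPbar q N :=
  FreeAlgebra.lift ℂ (fun p => toBar (X q p.2 p.1))

theorem stFree_gen (i j : Fin N) : stFree q N (gen i j) = toBar (X q j i) := by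
  simp [stFree, gen]

theorem stFree_rel (hq0 : q ≠ 0) ⦃x y : FA N⦄ (h : CPrel q N x y) :
    stFree q N x = stFree q N y := by
  cases h with
  | relm i j k l =>
    simp only [map_sum, map_smul, map_mul, stFree_gen, toBar_mul, smul_toBar, RCPm_conj]
    simp only [← map_sum]
    congr 1
    rw [sum_rev]
    simp only [RCPm_flip, X_rel_cm hq0]
    simp
  | relc i j k l =>
    simp only [map_sum, map_smul, map_mul, stFree_gen, toBar_mul, smul_toBar, RCP_conj]
    simp only [← map_sum]
    congr 1
    rw [sum_rev]
    simp only [RCPc_flip, X_rel hq0]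
    simp
  | relu =>
    simp only [map_sum, stFree_gen, map_one]
    rw [← map_sum, X_rel_u, toBar_one]

/-- the star map into the conjugate opposite -/
def stHom (hq0 : q ≠ 0) : CPq q N →ₐ[ℂ] CPbar q N :=
  RingQuot.liftAlgHom ℂ ⟨stFree q N, stFree_rel hq0⟩

theorem stHom_X (hq0 : q ≠ 0) (i j : Fin N) : stHom hq0 (X q i j) = toBar (X q j i) := by
  rw [X, stHom, RingQuot.liftAlgHom_mkAlgHom_apply, stFree_gen]

/-- the square of the star map -/
def stSq (hq0 : q ≠ 0) : CPq q N →ₐ[ℂ] CPq q N where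
  toFun a := ofBar (stHom hq0 (ofBar (stHom hq0 a)))
  map_one' := by
    have : ofBar (1 : CPbar q N) = 1 := rfl
    simp [this]
  map_zero' := by simp
  map_add' := by simp
  map_mul' := by simp [ofBar_mul]
  commutes' z := by
    rw [AlgHom.commutes, ofBar_algebraMap, AlgHom.commutes, ofBar_algebraMap]; simp

theorem stSq_eq (hq0 : q ≠ 0) : stSq (N := N) hq0 = AlgHom.id ℂ _ := by
  apply RingQuot.ringQuot_ext'
  apply FreeAlgebra.hom_ext
  funext p
  change ofBar (stHom hq0 (ofBar (stHom hq0 (X q p.1 p.2)))) = X q p.1 p.2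
  rw [stHom_X, of_to, stHom_X, of_to]

end Aux2

/-- `CP_q^{N-1}` admits a `*`-structure with `(x_ij)* = x_ji`. -/
theorem statement2 (q : ℝ) (hq0 : q ≠ 0) (hq1 : q ≠ 1) (hq2 : q ≠ -1) (N : ℕ) (hN : 2 ≤ N) :
    ∃ st : CPq q N → CPq q N,
      (∀ a b : CPq q N, st (a + b) = st a + st b) ∧
      (∀ (z : ℂ) (a : CPq q N), st (z • a) = (starRingEnd ℂ) z • st a) ∧
      (∀ a : CPq q N, st (st a) = a) ∧
      (∀ a b : CPq q N, st (a * b) = st b * st a) ∧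
      st 1 = 1 ∧
      (∀ i j : Fin N, st (X q i j) = X q j i) := by
  refine ⟨fun a => ofBar (stHom hq0 a), ?_, ?_, ?_, ?_, ?_, ?_⟩
  · intro a b; simp
  · intro z a
    change ofBar (stHom hq0 (z • a)) = _
    rw [map_smul, ofBar_smul]
  · intro a; exact DFunLike.congr_fun (stSq_eq hq0) a
  · intro a b
    change ofBar (stHom hq0 (a * b)) = _
    rw [map_mul, ofBar_mul]
  · change ofBar (stHom hq0 1) = _
    rw [map_one]; rfl
  · intro i j
    change ofBar (stHom hq0 (X q i j)) = _
    rw [stHom_X, of_to]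
end
end

section
/- For every N ≥ 2 there exists a first order differential calculus (Γ,d) on CP_q^{N−1} with the following two properties. (a) The left-module map π : F → Γ with π(e_ij) = d x_ij is surjective, and its kernel is the left submodule of F generated by the element ω̂ together with the N² elements ρ'_ij := e_ij − q² Σ_s q^{−2s} x_is e_sj − q⁻¹ Σ_{a,b,c,s,t,u,v} Rlm^{tu}_{bc} R⁻^{sb}_{ia} Rc^{cv}_{aj} x_st e_uv; in particular ⍵ = 0 in Γ. (b) For all i,j,k,l: d x_ij·x_kl = q^{−2} Σ_{a,b,c,s,t,u,v,w,x,y,z} RCPm^{xyzw}_{ijkl} Rlm^{tu}_{bc} R⁻^{sb}_{za} Rc^{cv}_{aw} x_xy x_st d x_uv + q³ Σ_{s,t,u,v,w} q^{−2w} RCPc^{stuv}_{ijkl} x_st x_uw d x_wv. -/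
open scoped BigOperators

noncomputable section

section Tensor
set_option linter.unusedSectionVars false
variable {N : ℕ} (A : Type) [Ring A] [Algebra ℂ A]
variable {M M' : Type} [AddCommMonoid M] [Module ℂ M] [Module A M] [IsScalarTower ℂ A M]
  [AddCommMonoid M'] [Module ℂ M'] [Module A M'] [IsScalarTower ℂ A M']

/-- operator on the first two legs of a tensor with coefficients `m` -/
def tL (m : Fin N → Fin N → Fin N → Fin N → ℂ) :
    (Fin N → Fin N → M) →ₗ[A] (Fin N → Fin N → M) where
  toFun f := fun a b => ∑ t, ∑ u, m t u a b • f t u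
  map_add' f g := by
    funext a b; simp [smul_add, Finset.sum_add_distrib]
  map_smul' c f := by
    funext a b; simp [Finset.smul_sum, smul_comm c]

/-- shift of an operator by one leg -/
def tS {A : Type} [Ring A] {X Y : Type} [AddCommMonoid X] [Module A X] [AddCommMonoid Y] [Module A Y]
    (g : X →ₗ[A] Y) : (Fin N → X) →ₗ[A] (Fin N → Y) where
  toFun f := fun i => g (f i)
  map_add' f h := by funext i; simp
  map_smul' c f := by funext i; simp

/-- contraction of the first two legs -/
def tU : (Fin N → Fin N → M) →ₗ[A] M where
  toFun f := ∑ k, f k k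
  map_add' f g := by simp [Finset.sum_add_distrib]
  map_smul' c f := by simp [Finset.smul_sum]

/-- weighted contraction of the first two legs -/
def tN (q : ℝ) : (Fin N → Fin N → M) →ₗ[A] M where
  toFun f := ∑ k, pw q (2 - 2 * iv k) • f k k
  map_add' f g := by simp [Finset.sum_add_distrib]
  map_smul' c f := by simp [Finset.smul_sum, smul_comm c]

theorem tL_apply (m : Fin N → Fin N → Fin N → Fin N → ℂ) (f : Fin N → Fin N → M) (a b : Fin N) :
    tL A m f a b = ∑ t, ∑ u, m t u a b • f t u := rfl

theorem tS_apply {A : Type} [Ring A] {X Y : Type} [AddCommMonoid X] [Module A X] [AddCommMonoid Y] [Module A Y]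
    (g : X →ₗ[A] Y) (f : Fin N → X) (i : Fin N) : tS g f i = g (f i) := rfl

theorem tU_apply (f : Fin N → Fin N → M) : tU A f = ∑ k, f k k := rfl

theorem tN_apply (q : ℝ) (f : Fin N → Fin N → M) :
    tN A q f = ∑ k, pw q (2 - 2 * iv k) • f k k := rfl

variable {A}
theorem h_csmul (h : M →ₗ[A] M') (c : ℂ) (f : M) : h (c • f) = c • h f :=
  LinearMap.map_smul_of_tower h c f

theorem far (m : Fin N → Fin N → Fin N → Fin N → ℂ) (h : M →ₗ[A] M') (f : Fin N → Fin N → M) :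
    tL A m (tS (tS h) f) = tS (tS h) (tL A m f) := by
  funext a b
  simp only [tL_apply, tS_apply, map_sum, h_csmul]

theorem farU (h : M →ₗ[A] M') (f : Fin N → Fin N → M) :
    tU A (tS (tS h) f) = h (tU A f) := by
  simp only [tU_apply, tS_apply, map_sum]

theorem farN (q : ℝ) (h : M →ₗ[A] M') (f : Fin N → Fin N → M) :
    tN A q (tS (tS h) f) = h (tN A q f) := by
  simp only [tN_apply, tS_apply, map_sum, h_csmul]

theorem far_2 (m : Fin N → Fin N → Fin N → Fin N → ℂ) (h : M →ₗ[A] M')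
    (f : Fin N → Fin N → Fin N → M) :
    tS (tL A m) (tS (tS (tS h)) f) = tS (tS (tS h)) (tS (tL A m) f) := by
  funext i; exact far m h (f i)

theorem far_3 (m : Fin N → Fin N → Fin N → Fin N → ℂ) (h : M →ₗ[A] M')
    (f : Fin N → Fin N → Fin N → Fin N → M) :
    tS (tS (tL A m)) (tS (tS (tS (tS h))) f) = tS (tS (tS (tS h))) (tS (tS (tL A m)) f) := by
  funext i; exact far_2 m h (f i)

theorem far_4 (m : Fin N → Fin N → Fin N → Fin N → ℂ) (h : M →ₗ[A] M')
    (f : Fin N → Fin N → Fin N → Fin N → Fin N → M) :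
    tS (tS (tS (tL A m))) (tS (tS (tS (tS (tS h)))) f)
      = tS (tS (tS (tS (tS h)))) (tS (tS (tS (tL A m))) f) := by
  funext i; exact far_3 m h (f i)

theorem farU_2 (h : M →ₗ[A] M') (f : Fin N → Fin N → Fin N → M) :
    tS (tU A) (tS (tS (tS h)) f) = tS h (tS (tU A) f) := by
  funext i; exact farU h (f i)

theorem farU_3 (h : M →ₗ[A] M') (f : Fin N → Fin N → Fin N → Fin N → M) :
    tS (tS (tU A)) (tS (tS (tS (tS h))) f) = tS (tS h) (tS (tS (tU A)) f) := by
  funext i; exact farU_2 h (f i)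

theorem farU_4 (h : M →ₗ[A] M') (f : Fin N → Fin N → Fin N → Fin N → Fin N → M) :
    tS (tS (tS (tU A))) (tS (tS (tS (tS (tS h)))) f) = tS (tS (tS h)) (tS (tS (tS (tU A))) f) := by
  funext i; exact farU_3 h (f i)

theorem farN_2 (q : ℝ) (h : M →ₗ[A] M') (f : Fin N → Fin N → Fin N → M) :
    tS (tN A q) (tS (tS (tS h)) f) = tS h (tS (tN A q) f) := by
  funext i; exact farN q h (f i)

theorem farN_3 (q : ℝ) (h : M →ₗ[A] M') (f : Fin N → Fin N → Fin N → Fin N → M) :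
    tS (tS (tN A q)) (tS (tS (tS (tS h))) f) = tS (tS h) (tS (tS (tN A q)) f) := by
  funext i; exact farN_2 q h (f i)

variable (A)

theorem tL_tL (m m' : Fin N → Fin N → Fin N → Fin N → ℂ) (f : Fin N → Fin N → M) :
    tL A m (tL A m' f) = tL A (fun i j k l => ∑ a, ∑ b, m a b k l * m' i j a b) f := by
  funext k l
  simp only [tL_apply, Finset.smul_sum, Finset.sum_smul, smul_smul]
  simp only [← Fintype.sum_prod_type']
  refine Fintype.sum_equiv ⟨fun ⟨a, b, i, j⟩ => (i, j, a, b), fun ⟨i, j, a, b⟩ => (a, b, i, j),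
    fun ⟨_, _, _, _⟩ => rfl, fun ⟨_, _, _, _⟩ => rfl⟩ _ _ ?_
  intro ⟨a, b, i, j⟩; rfl

/-- coefficients of `m₁₂ m'₂₃ m''₁₂` -/
def triA (m m' m'' : Fin N → Fin N → Fin N → Fin N → ℂ) (i j k a b c : Fin N) : ℂ :=
  ∑ t, ∑ u, ∑ v, m t u a b * m' v k u c * m'' i j t v

/-- coefficients of `m₂₃ m'₁₂ m''₂₃` -/
def triB (m m' m'' : Fin N → Fin N → Fin N → Fin N → ℂ) (i j k a b c : Fin N) : ℂ :=
  ∑ t, ∑ u, ∑ w, m t u b c * m' i w a t * m'' j k w u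

theorem triA_eq (m m' m'' : Fin N → Fin N → Fin N → Fin N → ℂ) (f : Fin N → Fin N → Fin N → M)
    (a b c : Fin N) :
    tL A m (tS (tL A m') (tL A m'' f)) a b c
      = ∑ i, ∑ j, ∑ k, triA m m' m'' i j k a b c • f i j k := by
  simp only [tL_apply, tS_apply, Finset.sum_apply, Pi.smul_apply, Finset.smul_sum, Finset.sum_smul,
    smul_smul, triA]
  simp only [← Fintype.sum_prod_type']
  refine Fintype.sum_equiv ⟨fun ⟨t, u, v, w, i, j⟩ => (i, j, w, t, u, v),
    fun ⟨i, j, w, t, u, v⟩ => (t, u, v, w, i, j),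
    fun ⟨_, _, _, _, _, _⟩ => rfl, fun ⟨_, _, _, _, _, _⟩ => rfl⟩ _ _ ?_
  intro ⟨t, u, v, w, i, j⟩; simp only [Equiv.coe_fn_mk, mul_assoc]

theorem triB_eq (m m' m'' : Fin N → Fin N → Fin N → Fin N → ℂ) (f : Fin N → Fin N → Fin N → M)
    (a b c : Fin N) :
    tS (tL A m) (tL A m' (tS (tL A m'') f)) a b c
      = ∑ i, ∑ j, ∑ k, triB m m' m'' i j k a b c • f i j k := by
  simp only [tL_apply, tS_apply, Finset.sum_apply, Pi.smul_apply, Finset.smul_sum, Finset.sum_smul,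
    smul_smul, triB]
  simp only [← Fintype.sum_prod_type']
  refine Fintype.sum_equiv ⟨fun ⟨t, u, v, w, i, j⟩ => (v, i, j, t, u, w),
    fun ⟨v, i, j, t, u, w⟩ => (t, u, v, w, i, j),
    fun ⟨_, _, _, _, _, _⟩ => rfl, fun ⟨_, _, _, _, _, _⟩ => rfl⟩ _ _ ?_
  intro ⟨t, u, v, w, i, j⟩; simp only [Equiv.coe_fn_mk, mul_assoc]

theorem tri_op (m m' m'' n n' n'' : Fin N → Fin N → Fin N → Fin N → ℂ)
    (h : ∀ i j k a b c, triA m m' m'' i j k a b c = triB n n' n'' i j k a b c)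
    (f : Fin N → Fin N → Fin N → M) :
    tL A m (tS (tL A m') (tL A m'' f)) = tS (tL A n) (tL A n' (tS (tL A n'') f)) := by
  funext a b c
  rw [triA_eq, triB_eq]; simp only [h]

theorem tri_coef (m m' m'' n n' n'' : Fin N → Fin N → Fin N → Fin N → ℂ)
    (h : ∀ f : Fin N → Fin N → Fin N → ℂ,
      tL ℂ m (tS (tL ℂ m') (tL ℂ m'' f)) = tS (tL ℂ n) (tL ℂ n' (tS (tL ℂ n'') f)))
    (i j k a b c : Fin N) : triA m m' m'' i j k a b c = triB n n' n'' i j k a b c := by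
  have := congrFun (congrFun (congrFun (h (fun i' j' k' => if i' = i then if j' = j then
    if k' = k then 1 else 0 else 0 else 0)) a) b) c
  rw [triA_eq, triB_eq] at this
  simpa using this
end Tensor
section Base
set_option linter.unusedSectionVars false
variable {N : ℕ} (q : ℝ) (A : Type) [Ring A] [Algebra ℂ A]
variable {M M' : Type} [AddCommMonoid M] [Module ℂ M] [Module A M] [IsScalarTower ℂ A M]
  [AddCommMonoid M'] [Module ℂ M'] [Module A M'] [IsScalarTower ℂ A M']

def cP (i j k l : Fin N) : ℂ := (q : ℂ) * Rminus q i j k l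
def cQ (i j k l : Fin N) : ℂ := (q : ℂ)⁻¹ * Rc q i j k l
def cC (i j k l : Fin N) : ℂ := (q : ℂ) * Rlm q i j k l
def cD (i j k l : Fin N) : ℂ := (q : ℂ)⁻¹ * Rr q i j k l

theorem Rmat_split (i j k l : Fin N) : Rmat q i j k l =
    (if i = l then if j = k then (if k = l then (q : ℂ) else 1) else 0 else 0)
    + (if i = k then if j = l then (if k < l then (q : ℂ) - (q : ℂ)⁻¹ else 0) else 0 else 0) := by
  unfold Rmat; grind

theorem tR_apply (f : Fin N → Fin N → M) (k l : Fin N) :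
    tL A (Rmat q) f k l = (if k = l then (q : ℂ) else 1) • f l k
      + (if k < l then (q : ℂ) - (q : ℂ)⁻¹ else 0) • f k l := by
  rw [tL_apply]
  simp only [Rmat_split, add_smul, Finset.sum_add_distrib, ite_smul, zero_smul]
  simp

theorem tRm_apply (f : Fin N → Fin N → M) (k l : Fin N) :
    tL A (Rminus q) f k l = (if k = l then (q : ℂ) else 1) • f l k
      + ((if k < l then (q : ℂ) - (q : ℂ)⁻¹ else 0) - ((q : ℂ) - (q : ℂ)⁻¹)) • f k l := by
  rw [tL_apply]
  have : ∀ i j k l : Fin N, Rminus q i j k l =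
    (if i = l then if j = k then (if k = l then (q : ℂ) else 1) else 0 else 0)
    + (if i = k then if j = l then ((if k < l then (q : ℂ) - (q : ℂ)⁻¹ else 0)
      - ((q : ℂ) - (q : ℂ)⁻¹)) else 0 else 0) := by
    intro i j k l; unfold Rminus; rw [Rmat_split]; grind
  simp only [this, add_smul, Finset.sum_add_distrib, ite_smul, zero_smul]
  simp

theorem R_braid (hq : q ≠ 0) (f : Fin N → Fin N → Fin N → M) :
    tL A (Rmat q) (tS (tL A (Rmat q)) (tL A (Rmat q) f))
      = tS (tL A (Rmat q)) (tL A (Rmat q) (tS (tL A (Rmat q)) f)) := by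
  have hq' : (q : ℂ) ≠ 0 := by exact_mod_cast hq
  funext a b c
  simp only [tR_apply, tS_apply, Pi.add_apply, Pi.smul_apply]
  rcases lt_trichotomy a b with h | h | h <;> rcases lt_trichotomy b c with h' | h' | h' <;>
  rcases lt_trichotomy a c with h'' | h'' | h'' <;> first | (exfalso; omega) | skip
  all_goals
    (try subst h); (try subst h'); (try subst h'')
    simp [*, not_lt_of_gt, ne_of_lt, ne_of_gt]
    try (match_scalars <;> field_simp <;> ring)

theorem Rm_braid (hq : q ≠ 0) (f : Fin N → Fin N → Fin N → M) :
    tL A (Rminus q) (tS (tL A (Rminus q)) (tL A (Rminus q) f))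
      = tS (tL A (Rminus q)) (tL A (Rminus q) (tS (tL A (Rminus q)) f)) := by
  have hq' : (q : ℂ) ≠ 0 := by exact_mod_cast hq
  funext a b c
  simp only [tRm_apply, tS_apply, Pi.add_apply, Pi.smul_apply]
  rcases lt_trichotomy a b with h | h | h <;> rcases lt_trichotomy b c with h' | h' | h' <;>
  rcases lt_trichotomy a c with h'' | h'' | h'' <;> first | (exfalso; omega) | skip
  all_goals
    (try subst h); (try subst h'); (try subst h'')
    simp [*, not_lt_of_gt, ne_of_lt, ne_of_gt]
    try (match_scalars <;> field_simp <;> ring)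

theorem R_Rm (hq : q ≠ 0) (f : Fin N → Fin N → M) :
    tL A (Rmat q) (tL A (Rminus q) f) = f := by
  have hq' : (q : ℂ) ≠ 0 := by exact_mod_cast hq
  funext a b
  simp only [tR_apply, tRm_apply]
  rcases lt_trichotomy a b with h | h | h
  all_goals
    (try subst h)
    simp [*, not_lt_of_gt, ne_of_lt, ne_of_gt]
    try (match_scalars <;> field_simp <;> ring)

theorem Rm_eq (f : Fin N → Fin N → M) :
    tL A (Rmat q) f = tL A (Rminus q) f + ((q : ℂ) - (q : ℂ)⁻¹) • f := by
  funext a b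
  simp only [tR_apply, tRm_apply, Pi.add_apply, Pi.smul_apply]
  module

theorem Rm_R (hq : q ≠ 0) (f : Fin N → Fin N → M) :
    tL A (Rminus q) (tL A (Rmat q) f) = f := by
  rw [Rm_eq, map_add, h_csmul, ← Rm_eq, R_Rm _ _ hq]

theorem R_mixed (hq : q ≠ 0) (f : Fin N → Fin N → Fin N → M) :
    tL A (Rminus q) (tS (tL A (Rmat q)) (tL A (Rmat q) f))
      = tS (tL A (Rmat q)) (tL A (Rmat q) (tS (tL A (Rminus q)) f)) := by
  have h := R_braid q A hq (tS (tL A (Rminus q)) f)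
  have h2 : tS (tL A (Rmat q)) (tS (tL A (Rminus q)) f) = f := by
    funext i; exact R_Rm q A hq (f i)
  rw [h2] at h
  rw [← h, Rm_R _ _ hq]

theorem sum_id3 (F G : Fin N → Fin N → Fin N → ℂ) (c : ℂ) (h : ∀ t u v, F t u v = c * G t u v) :
    ∑ t, ∑ u, ∑ v, F t u v = c * ∑ t, ∑ u, ∑ v, G t u v := by
  simp only [h, Finset.mul_sum]

theorem sum_rot3 (F G : Fin N → Fin N → Fin N → ℂ) (c : ℂ) (h : ∀ t u v, F t u v = c * G u v t) :
    ∑ t, ∑ u, ∑ v, F t u v = c * ∑ t, ∑ u, ∑ v, G t u v := by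
  simp only [h, ← Finset.mul_sum]
  congr 1
  rw [Finset.sum_comm]
  refine Finset.sum_congr rfl fun u _ => ?_
  rw [Finset.sum_comm]

theorem sum_rot3b (F G : Fin N → Fin N → Fin N → ℂ) (c : ℂ) (h : ∀ t u v, F t u v = c * G v t u) :
    ∑ t, ∑ u, ∑ v, F t u v = c * ∑ t, ∑ u, ∑ v, G t u v := by
  simp only [h, ← Finset.mul_sum]
  congr 1
  rw [Finset.sum_comm' (t' := Finset.univ) (s' := fun _ => Finset.univ) (by simp)]
  rw [Finset.sum_comm]
  conv_rhs => rw [Finset.sum_comm]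
  refine Finset.sum_congr rfl fun u _ => ?_
  rw [Finset.sum_comm]

theorem YB_R (hq : q ≠ 0) (i j k a b c : Fin N) :
    triA (Rmat q) (Rmat q) (Rmat q) i j k a b c = triB (Rmat q) (Rmat q) (Rmat q) i j k a b c :=
  tri_coef _ _ _ _ _ _ (R_braid q ℂ hq) i j k a b c

theorem YB_mix (hq : q ≠ 0) (i j k a b c : Fin N) :
    triA (Rminus q) (Rmat q) (Rmat q) i j k a b c
      = triB (Rmat q) (Rmat q) (Rminus q) i j k a b c :=
  tri_coef _ _ _ _ _ _ (R_mixed q ℂ hq) i j k a b c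

theorem YB_Rm (hq : q ≠ 0) (i j k a b c : Fin N) :
    triA (Rminus q) (Rminus q) (Rminus q) i j k a b c
      = triB (Rminus q) (Rminus q) (Rminus q) i j k a b c :=
  tri_coef _ _ _ _ _ _ (Rm_braid q ℂ hq) i j k a b c

theorem DDP (hq : q ≠ 0) (f : Fin N → Fin N → Fin N → M) :
    tL A (cD q) (tS (tL A (cD q)) (tL A (cP q) f))
      = tS (tL A (cP q)) (tL A (cD q) (tS (tL A (cD q)) f)) := by
  apply tri_op
  intro i j k a b c
  refine Eq.trans (sum_rot3 _ _ ((q : ℂ)⁻¹ * (q : ℂ)⁻¹ * q) ?_)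
    ((congrArg _ (YB_mix q hq a i j b c k).symm).trans (sum_id3 _ _ _ ?_).symm)
  all_goals intro t u v; simp only [cD, cP, Rr]; ring

theorem QDD (hq : q ≠ 0) (f : Fin N → Fin N → Fin N → M) :
    tL A (cQ q) (tS (tL A (cD q)) (tL A (cD q) f))
      = tS (tL A (cD q)) (tL A (cD q) (tS (tL A (cQ q)) f)) := by
  apply tri_op
  intro i j k a b c
  refine Eq.trans (sum_rot3 _ _ ((q : ℂ)⁻¹ * (q : ℂ)⁻¹ * (q : ℂ)⁻¹) ?_)
    ((congrArg _ (YB_R q hq b a i c k j)).trans (sum_rot3 _ _ _ ?_).symm)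
  all_goals intro t u v; simp only [cD, cQ, Rr, Rc]; ring

theorem QQQ (hq : q ≠ 0) (f : Fin N → Fin N → Fin N → M) :
    tL A (cQ q) (tS (tL A (cQ q)) (tL A (cQ q) f))
      = tS (tL A (cQ q)) (tL A (cQ q) (tS (tL A (cQ q)) f)) := by
  apply tri_op
  intro i j k a b c
  refine Eq.trans (sum_rot3b _ _ ((q : ℂ)⁻¹ * (q : ℂ)⁻¹ * (q : ℂ)⁻¹) ?_)
    ((congrArg _ (YB_R q hq c b a k j i).symm).trans (sum_rot3 _ _ _ ?_).symm)
  all_goals intro t u v; simp only [cQ, Rc]; ring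

theorem PPP (hq : q ≠ 0) (f : Fin N → Fin N → Fin N → M) :
    tL A (cP q) (tS (tL A (cP q)) (tL A (cP q) f))
      = tS (tL A (cP q)) (tL A (cP q) (tS (tL A (cP q)) f)) := by
  apply tri_op
  intro i j k a b c
  refine Eq.trans (sum_id3 _ _ (q * q * q : ℂ) ?_)
    ((congrArg _ (YB_Rm q hq i j k a b c)).trans (sum_id3 _ _ _ ?_).symm)
  all_goals intro t u v; simp only [cP]; ring

theorem P_apply (f : Fin N → Fin N → M) : tL A (cP q) f = (q : ℂ) • tL A (Rminus q) f := by
  funext k l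
  simp only [tL_apply, Pi.smul_apply, Finset.smul_sum, smul_smul, cP]

/-- Hecke relation for `P` -/
theorem P_hecke (hq : q ≠ 0) (f : Fin N → Fin N → M) :
    pw q (-2) • tL A (cP q) (tL A (cP q) f) = f + (pw q (-2) - 1) • tL A (cP q) f := by
  have hq' : (q : ℂ) ≠ 0 := by exact_mod_cast hq
  have e : pw q (-2) = (q : ℂ)⁻¹ * (q : ℂ)⁻¹ := by unfold pw; rw [zpow_neg]; field_simp
  rw [e]
  simp only [P_apply, h_csmul]
  funext a b
  simp only [tRm_apply, Pi.add_apply, Pi.smul_apply]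
  rcases lt_trichotomy a b with h | h | h
  all_goals
    (try subst h)
    simp [*, not_lt_of_gt, ne_of_lt, ne_of_gt]
    try (match_scalars <;> field_simp <;> ring)

/-- Hecke relation for `Q` -/
theorem Q_hecke (hq : q ≠ 0) (f : Fin N → Fin N → M) :
    pw q 2 • tL A (cQ q) (tL A (cQ q) f) = f + (pw q 2 - 1) • tL A (cQ q) f := by
  have hq' : (q : ℂ) ≠ 0 := by exact_mod_cast hq
  have e : pw q 2 = q * q := by unfold pw; norm_cast; ring
  rw [e]
  have h1 : ∀ (f : Fin N → Fin N → M) (k l : Fin N), tL A (cQ q) f k l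
      = (q : ℂ)⁻¹ • ((if k = l then (q : ℂ) else 1) • f l k
      + (if l < k then (q : ℂ) - (q : ℂ)⁻¹ else 0) • f k l) := by
    intro f k l
    have : ∀ i j k l : Fin N, cQ q i j k l = (q : ℂ)⁻¹ * (
      (if i = l then if j = k then (if k = l then (q : ℂ) else 1) else 0 else 0)
      + (if i = k then if j = l then (if l < k then (q : ℂ) - (q : ℂ)⁻¹ else 0)
         else 0 else 0)) := by
      intro i j k l; unfold cQ Rc; rw [Rmat_split]; grind
    rw [tL_apply]
    simp only [this, mul_smul, ← Finset.smul_sum]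
    simp only [add_smul, Finset.sum_add_distrib, ite_smul, zero_smul]
    simp
  funext a b
  simp only [h1, Pi.add_apply, Pi.smul_apply]
  rcases lt_trichotomy a b with h | h | h
  all_goals
    (try subst h)
    simp [*, not_lt_of_gt, ne_of_lt, ne_of_gt]
    try (match_scalars <;> field_simp <;> ring)


theorem sum_geo (hq : q ≠ 0) (n : ℕ) (j u : ℕ) (hju : j < u) :
    ∑ a ∈ Finset.range n, (if j < a ∧ a < u then ((q : ℂ) - (q : ℂ)⁻¹) * pw q (2 * a - 2 * u) else 0)
      = if n ≤ j then 0 else pw q (2 * min (n : ℤ) u - 2 * u - 1) - pw q (2 * j - 2 * u + 1) := by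
  have hq' : (q : ℂ) ≠ 0 := by exact_mod_cast hq
  induction n with
  | zero => simp
  | succ n ih =>
    rw [Finset.sum_range_succ, ih]
    rcases lt_trichotomy n j with h | h | h
    · rw [if_pos h.le, if_neg (by omega), if_pos (by omega)]; simp
    · subst h
      rw [if_pos le_rfl, if_neg (by omega), if_neg (by omega), min_eq_left (by omega)]
      push_cast
      rw [show 2 * ((n : ℤ) + 1) - 2 * u - 1 = 2 * n - 2 * u + 1 by ring]; simp
    · rw [if_neg (show ¬ n ≤ j by omega), if_neg (show ¬ n + 1 ≤ j by omega)]
      by_cases h' : n < u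
      · rw [if_pos ⟨h, h'⟩, min_eq_left (by omega), min_eq_left (by omega)]
        push_cast
        have e1 : pw q (2 * ((n : ℤ) + 1) - 2 * u - 1) = pw q (2 * n - 2 * u) * q := by
          unfold pw; rw [← zpow_add_one₀ hq']; congr 1; ring
        have e2 : pw q (2 * (n : ℤ) - 2 * u - 1) = pw q (2 * n - 2 * u) * (q : ℂ)⁻¹ := by
          unfold pw; rw [← zpow_sub_one₀ hq']
        rw [e1, e2]; ring
      · rw [if_neg (by omega), min_eq_right (by omega), min_eq_right (by omega)]; simp

theorem sum_geo_fin (hq : q ≠ 0) (j u : Fin N) (hju : j < u) :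
    ∑ a : Fin N, (if j < a ∧ a < u then ((q : ℂ) - (q : ℂ)⁻¹) * pw q (2 * iv a - 2 * iv u) else 0)
      = (q : ℂ)⁻¹ - pw q (2 * iv j - 2 * iv u + 1) := by
  have h := sum_geo q hq N j u hju
  rw [Finset.sum_range, if_neg (by omega), min_eq_right (by omega)] at h
  have e : pw q (2 * (u : ℕ) - 2 * (u : ℕ) - 1) = (q : ℂ)⁻¹ := by
    unfold pw; simp
  rw [e] at h
  unfold iv
  convert h using 2
  · congr 3; ring
  · congr 1; ring

/-- the entries of `C` and `D` -/
theorem cD_split (i j k l : Fin N) : cD q i j k l = (q : ℂ)⁻¹ * (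
    (if i = l then if j = k then (if k = l then (q : ℂ) else 1) else 0 else 0)
    + (if i = j then if k = l then (if k < i then (q : ℂ) - (q : ℂ)⁻¹ else 0) else 0 else 0)) := by
  unfold cD Rr Rmat; grind

theorem D_apply (f : Fin N → Fin N → M) (k l : Fin N) :
    tL A (cD q) f k l = (q : ℂ)⁻¹ • ((if k = l then (q : ℂ) else 1) • f l k
      + (if k = l then ∑ i, (if k < i then (q : ℂ) - (q : ℂ)⁻¹ else 0) • f i i else 0)) := by
  rw [tL_apply]
  simp only [cD_split, mul_smul, ← Finset.smul_sum]
  simp only [add_smul, Finset.sum_add_distrib, ite_smul, zero_smul]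
  by_cases h : k = l <;> simp [h]

theorem cC_split (hq : q ≠ 0) (i j k l : Fin N) : cC q i j k l = (q : ℂ) * (
    (if i = l then if j = k then (if k = l then (q : ℂ)⁻¹ else 1) else 0 else 0)
    + (if i = j then if k = l then (if k < i then
      - (((q : ℂ) - (q : ℂ)⁻¹) * pw q (2 * iv k - 2 * iv i)) else 0) else 0 else 0)) := by
  have hp : pw q 0 = 1 := by simp [pw]
  unfold cC Rlm Rminus Rmat; grind

theorem C_apply (hq : q ≠ 0) (f : Fin N → Fin N → M) (k l : Fin N) :
    tL A (cC q) f k l = (q : ℂ) • ((if k = l then (q : ℂ)⁻¹ else 1) • f l k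
      + (if k = l then ∑ i, (if k < i then
        - (((q : ℂ) - (q : ℂ)⁻¹) * pw q (2 * iv k - 2 * iv i)) else 0) • f i i else 0)) := by
  rw [tL_apply]
  simp only [cC_split q hq, mul_smul, ← Finset.smul_sum]
  simp only [add_smul, Finset.sum_add_distrib, ite_smul, zero_smul]
  by_cases h : k = l <;> simp [h]

end Base
section Base2
set_option linter.unusedSectionVars false
variable {N : ℕ} (q : ℝ) (A : Type) [Ring A] [Algebra ℂ A]
variable {M M' : Type} [AddCommMonoid M] [Module ℂ M] [Module A M] [IsScalarTower ℂ A M]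
  [AddCommMonoid M'] [Module ℂ M'] [Module A M'] [IsScalarTower ℂ A M']

theorem DC_C (hq : q ≠ 0) (f : Fin N → Fin N → ℂ) : tL ℂ (cD q) (tL ℂ (cC q) f) = f := by
  have hq' : (q : ℂ) ≠ 0 := by exact_mod_cast hq
  have hqi : (q : ℂ) * (q : ℂ)⁻¹ = 1 := mul_inv_cancel₀ hq'
  funext k l
  rw [D_apply]
  by_cases h : k = l
  · subst h
    set la : ℂ := (q : ℂ) - (q : ℂ)⁻¹ with hla
    have hC : ∀ i : Fin N, tL ℂ (cC q) f i i = f i i - q * la *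
        ∑ u, (if i < u then pw q (2 * iv i - 2 * iv u) * f u u else 0) := by
      intro i
      rw [C_apply q _ hq, if_pos rfl, if_pos rfl]
      simp only [smul_eq_mul, mul_add, ← mul_assoc, hqi, one_mul, Finset.mul_sum]
      rw [sub_eq_add_neg (f i i), ← Finset.sum_neg_distrib]
      congr 1
      refine Finset.sum_congr rfl fun u _ => ?_
      rw [hla]
      split_ifs <;> ring
    simp only [if_true, smul_eq_mul, hC]
    have e3 : ∑ i : Fin N, (if k < i then la else 0) * (f i i - q * la *
        ∑ u, (if i < u then pw q (2 * iv i - 2 * iv u) * f u u else 0))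
        = ∑ u : Fin N, (if k < u then (la - q * la * ∑ a : Fin N, (if k < a ∧ a < u then
            la * pw q (2 * iv a - 2 * iv u) else 0)) * f u u else 0) := by
      have e4 : ∀ u, (if k < u then (la - q * la * ∑ a : Fin N, (if k < a ∧ a < u then
            la * pw q (2 * iv a - 2 * iv u) else 0)) * f u u else 0)
            = (if k < u then la * f u u else 0) + ∑ a : Fin N, (if k < a ∧ a < u then
            - (q * la * la * pw q (2 * iv a - 2 * iv u) * f u u) else 0) := by
        intro u
        by_cases hu : k < u
        · rw [if_pos hu, if_pos hu, sub_mul, sub_eq_add_neg (la * f u u)]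
          simp only [Finset.mul_sum, Finset.sum_mul, ← Finset.sum_neg_distrib]
          congr 1
          refine Finset.sum_congr rfl fun a _ => ?_
          split_ifs <;> ring
        · rw [if_neg hu, if_neg hu, Finset.sum_eq_zero, add_zero]
          intro a _
          rw [if_neg]; rintro ⟨h1, h2⟩; exact hu (h1.trans h2)
      simp only [e4, Finset.sum_add_distrib, mul_sub, Finset.sum_sub_distrib]
      rw [sub_eq_add_neg]
      congr 1
      · refine Finset.sum_congr rfl fun u _ => ?_
        split_ifs <;> ring
      · rw [Finset.sum_comm, ← Finset.sum_neg_distrib]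
        refine Finset.sum_congr rfl fun u _ => ?_
        simp only [Finset.mul_sum, ← Finset.sum_neg_distrib]
        refine Finset.sum_congr rfl fun a _ => ?_
        by_cases h1 : k < u <;> by_cases h2 : u < a <;> simp [h1, h2] ; ring
    rw [e3]
    have e5 : ∀ u : Fin N, (if k < u then (la - q * la * ∑ a : Fin N, (if k < a ∧ a < u then
            la * pw q (2 * iv a - 2 * iv u) else 0)) * f u u else 0)
            = q * q * la * (if k < u then pw q (2 * iv k - 2 * iv u) * f u u else 0) := by
      intro u
      split_ifs with hu
      · rw [sum_geo_fin q hq k u hu]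
        have : pw q (2 * iv k - 2 * iv u + 1) = pw q (2 * iv k - 2 * iv u) * q := by
          unfold pw; rw [← zpow_add_one₀ hq']
        rw [this]
        linear_combination (- la * f u u) * hqi
      · ring
    simp only [e5, ← Finset.mul_sum]
    generalize ∑ i, (if k < i then pw q (2 * iv k - 2 * iv i) * f i i else 0) = s
    linear_combination (f k k) * hqi
  · rw [if_neg h, if_neg h, C_apply q _ hq, if_neg (Ne.symm h), if_neg (Ne.symm h)]
    simp [hq']

theorem DC_coef (hq : q ≠ 0) (i j k l : Fin N) :
    ∑ a, ∑ b, cD q a b k l * cC q i j a b = if i = k then if j = l then 1 else 0 else 0 := by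
  have h := DC_C q hq (fun a b : Fin N => if a = i then if b = j then (1 : ℂ) else 0 else 0)
  rw [tL_tL] at h
  have h2 := congrFun (congrFun h k) l
  simp only [tL_apply] at h2
  simp at h2
  rw [h2]; simp only [eq_comm]

theorem tL_one (m : Fin N → Fin N → Fin N → Fin N → ℂ)
    (h : ∀ i j k l, m i j k l = if i = k then if j = l then 1 else 0 else 0)
    (f : Fin N → Fin N → M) : tL A m f = f := by
  funext k l
  rw [tL_apply]; simp [h]

theorem DC (hq : q ≠ 0) (f : Fin N → Fin N → M) : tL A (cD q) (tL A (cC q) f) = f := by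
  rw [tL_tL]; exact tL_one _ _ (DC_coef q hq) f

theorem CD_coef (hq : q ≠ 0) (i j k l : Fin N) :
    ∑ a, ∑ b, cC q a b k l * cD q i j a b = if i = k then if j = l then 1 else 0 else 0 := by
  let mC : Matrix (Fin N × Fin N) (Fin N × Fin N) ℂ := fun x y => cC q y.1 y.2 x.1 x.2
  let mD : Matrix (Fin N × Fin N) (Fin N × Fin N) ℂ := fun x y => cD q y.1 y.2 x.1 x.2
  have h : mD * mC = 1 := by
    ext ⟨k, l⟩ ⟨i, j⟩
    rw [Matrix.mul_apply, Fintype.sum_prod_type, Matrix.one_apply]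
    refine (DC_coef q hq i j k l).trans ?_
    simp only [Prod.mk.injEq, ite_and, eq_comm]
  have h2 : mC * mD = 1 := mul_eq_one_comm.mp h
  have h3 := congrFun (congrFun h2 (k, l)) (i, j)
  rw [Matrix.mul_apply, Fintype.sum_prod_type, Matrix.one_apply] at h3
  refine h3.trans ?_
  simp only [Prod.mk.injEq, ite_and, eq_comm]

theorem CD (hq : q ≠ 0) (f : Fin N → Fin N → M) : tL A (cC q) (tL A (cD q) f) = f := by
  rw [tL_tL]; exact tL_one _ _ (CD_coef q hq) f

theorem UC (hq : q ≠ 0) (f : Fin N → Fin N → M) : tU A (tL A (cC q) f) = tN A q f := by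
  have hq' : (q : ℂ) ≠ 0 := by exact_mod_cast hq
  have hqi : (q : ℂ) * (q : ℂ)⁻¹ = 1 := mul_inv_cancel₀ hq'
  rw [tU_apply, tN_apply]
  simp only [C_apply q _ hq, if_true, smul_add, smul_smul, hqi, one_smul, Finset.smul_sum,
    Finset.sum_add_distrib]
  rw [Finset.sum_comm, ← Finset.sum_add_distrib]
  refine Finset.sum_congr rfl fun u _ => ?_
  rw [← Finset.sum_smul]
  nth_rewrite 1 [← one_smul ℂ (f u u)]
  rw [← add_smul]
  congr 1
  have key : ∀ n : ℕ, ∑ a ∈ Finset.range n, (if a < (u : ℕ) then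
      (q : ℂ) * -(((q : ℂ) - (q : ℂ)⁻¹) * pw q (2 * (a + 1) - 2 * iv u)) else 0)
      = pw q (2 - 2 * iv u) - pw q (2 * min (n : ℤ) u + 2 - 2 * iv u) := by
    intro n
    induction n with
    | zero => simp
    | succ n ih =>
      rw [Finset.sum_range_succ, ih]
      by_cases h : n < (u : ℕ)
      · rw [if_pos h, min_eq_left (by omega), min_eq_left (by omega)]
        push_cast
        have e1 : pw q (2 * ((n : ℤ) + 1) + 2 - 2 * iv u) = pw q (2 * (n + 1) - 2 * iv u) * (q * q) := by
          unfold pw; rw [← mul_assoc, ← zpow_add_one₀ hq', ← zpow_add_one₀ hq']; congr 1; ring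
        have e2 : pw q (2 * (n : ℤ) + 2 - 2 * iv u) = pw q (2 * (n + 1) - 2 * iv u) := by
          congr 1
        rw [e1, e2]
        linear_combination (pw q (2 * (n + 1) - 2 * iv u)) * hqi
      · rw [if_neg h, min_eq_right (by omega), min_eq_right (by omega)]; simp
  have h := key N
  rw [Finset.sum_range, min_eq_right (by omega)] at h
  have e : pw q (2 * (u : ℕ) + 2 - 2 * iv u) = 1 := by
    unfold pw iv; ring_nf; simp
  rw [e] at h
  rw [eq_sub_iff_add_eq, add_comm] at h
  rw [← h]
  congr 1
  refine Finset.sum_congr rfl fun a _ => ?_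
  simp only [Fin.lt_def, iv]
  split_ifs <;> simp

theorem RRm_coef (hq : q ≠ 0) (i j k l : Fin N) :
    ∑ a, ∑ b, Rmat q a b k l * Rminus q i j a b = if i = k then if j = l then 1 else 0 else 0 := by
  have h := R_Rm q ℂ hq (fun a b : Fin N => if a = i then if b = j then (1 : ℂ) else 0 else 0)
  rw [tL_tL] at h
  have h2 := congrFun (congrFun h k) l
  simp only [tL_apply] at h2
  simp at h2
  rw [h2]; simp only [eq_comm]

theorem UDP (hq : q ≠ 0) (f : Fin N → Fin N → Fin N → M) :
    tU A (tS (tL A (cD q)) (tL A (cP q) f)) = tS (tU A) f := by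
  have hq' : (q : ℂ) ≠ 0 := by exact_mod_cast hq
  funext c
  have h : ∀ i j u, ∑ a, ∑ t, cD q t u a c * cP q i j a t = if i = c then if j = u then 1 else 0 else 0 := by
    intro i j u
    rw [← RRm_coef q hq]
    refine Finset.sum_congr rfl fun a _ => Finset.sum_congr rfl fun b _ => ?_
    simp only [cD, cP, Rr]; field_simp
  simp only [tU_apply, tS_apply, tL_apply, Finset.sum_apply, Pi.smul_apply, Finset.smul_sum, smul_smul]
  have e : ∑ u, f c u u = ∑ i, ∑ j, ∑ u, (∑ a, ∑ t, cD q t u a c * cP q i j a t) • f i j u := by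
    simp [h]
  rw [e]
  simp only [Finset.sum_smul]
  simp only [← Fintype.sum_prod_type']
  refine Fintype.sum_equiv ⟨fun ⟨a, t, u, i, j⟩ => (i, j, u, a, t),
    fun ⟨i, j, u, a, t⟩ => (a, t, u, i, j), fun ⟨_, _, _, _, _⟩ => rfl, fun ⟨_, _, _, _, _⟩ => rfl⟩ _ _ ?_
  intro ⟨a, t, u, i, j⟩; rfl

theorem UQC (hq : q ≠ 0) (f : Fin N → Fin N → Fin N → M) :
    tU A (tS (tL A (cQ q)) (tL A (cC q) f)) = tS (tU A) f := by
  funext c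
  have h : ∀ i j u, ∑ a, ∑ t, cQ q t u a c * cC q i j a t = if i = c then if j = u then 1 else 0 else 0 := by
    intro i j u
    rw [← DC_coef q hq]
    refine Finset.sum_congr rfl fun a _ => Finset.sum_congr rfl fun b _ => ?_
    simp only [cD, cQ, Rr, Rc]
  simp only [tU_apply, tS_apply, tL_apply, Finset.sum_apply, Pi.smul_apply, Finset.smul_sum, smul_smul]
  have e : ∑ u, f c u u = ∑ i, ∑ j, ∑ u, (∑ a, ∑ t, cQ q t u a c * cC q i j a t) • f i j u := by
    simp [h]
  rw [e]
  simp only [Finset.sum_smul]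
  simp only [← Fintype.sum_prod_type']
  refine Fintype.sum_equiv ⟨fun ⟨a, t, u, i, j⟩ => (i, j, u, a, t),
    fun ⟨i, j, u, a, t⟩ => (a, t, u, i, j), fun ⟨_, _, _, _, _⟩ => rfl, fun ⟨_, _, _, _, _⟩ => rfl⟩ _ _ ?_
  intro ⟨a, t, u, i, j⟩; rfl

end Base2
section Deriv
set_option linter.unusedSectionVars false
variable {N : ℕ} (q : ℝ) (A : Type) [Ring A] [Algebra ℂ A]
variable {M M' : Type} [AddCommMonoid M] [Module ℂ M] [Module A M] [IsScalarTower ℂ A M]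
  [AddCommMonoid M'] [Module ℂ M'] [Module A M'] [IsScalarTower ℂ A M']

local notation "P₁" => tL A (cP q)
local notation "P₂" => tS P₁
local notation "P₃" => tS P₂
local notation "P₄" => tS P₃
local notation "Q₁" => tL A (cQ q)
local notation "Q₂" => tS Q₁
local notation "Q₃" => tS Q₂
local notation "Q₄" => tS Q₃
local notation "Q₅" => tS Q₄
local notation "C₁" => tL A (cC q)
local notation "C₂" => tS C₁
local notation "C₃" => tS C₂
local notation "C₄" => tS C₃
local notation "D₁" => tL A (cD q)
local notation "D₂" => tS D₁
local notation "D₃" => tS D₂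
local notation "D₄" => tS D₃
local notation "U₁" => tU A
local notation "U₂" => tS U₁
local notation "U₃" => tS U₂
local notation "U₄" => tS U₃
local notation "K₁" => tN A q
local notation "K₂" => tS K₁
local notation "K₃" => tS K₂
local notation "K₄" => tS K₃

/-! derived relations and shifts -/
theorem DC_2 (hq : q ≠ 0) (f : Fin N → Fin N → Fin N → M) : D₂ (C₂ f) = f := by
  funext i; exact DC q A hq (f i)
theorem DC_3 (hq : q ≠ 0) (f : Fin N → Fin N → Fin N → Fin N → M) : D₃ (C₃ f) = f := by
  funext i; exact DC_2 q A hq (f i)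
theorem CD_2 (hq : q ≠ 0) (f : Fin N → Fin N → Fin N → M) : C₂ (D₂ f) = f := by
  funext i; exact CD q A hq (f i)
theorem CD_3 (hq : q ≠ 0) (f : Fin N → Fin N → Fin N → Fin N → M) : C₃ (D₃ f) = f := by
  funext i; exact CD_2 q A hq (f i)
theorem CD_4 (hq : q ≠ 0) (f : Fin N → Fin N → Fin N → Fin N → Fin N → M) : C₄ (D₄ f) = f := by
  funext i; exact CD_3 q A hq (f i)
theorem UC_2 (hq : q ≠ 0) (f : Fin N → Fin N → Fin N → M) : U₂ (C₂ f) = K₂ f := by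
  funext i; exact UC q A hq (f i)

theorem CCP (hq : q ≠ 0) (f : Fin N → Fin N → Fin N → M) : P₁ (C₂ (C₁ f)) = C₂ (C₁ (P₂ f)) := by
  have h := DDP q A hq (C₂ (C₁ f))
  rw [DC_2 q A hq, DC q A hq] at h
  rw [← h, CD q A hq, CD_2 q A hq]
theorem CCP_2 (hq : q ≠ 0) (f : Fin N → Fin N → Fin N → Fin N → M) :
    P₂ (C₃ (C₂ f)) = C₃ (C₂ (P₃ f)) := by
  funext i; exact CCP q A hq (f i)
theorem CP_2 (hq : q ≠ 0) (f : Fin N → Fin N → Fin N → Fin N → M) :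
    C₂ (P₃ f) = D₃ (P₂ (C₃ (C₂ f))) := by
  rw [CCP_2 q A hq, DC_3 q A hq]
theorem CCQ (hq : q ≠ 0) (f : Fin N → Fin N → Fin N → M) : Q₂ (C₁ (C₂ f)) = C₁ (C₂ (Q₁ f)) := by
  have h := QDD q A hq (C₁ (C₂ f))
  rw [DC q A hq, DC_2 q A hq] at h
  rw [h, CD_2 q A hq, CD q A hq]
theorem CCQ_2 (hq : q ≠ 0) (f : Fin N → Fin N → Fin N → Fin N → M) :
    Q₃ (C₂ (C₃ f)) = C₂ (C₃ (Q₂ f)) := by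
  funext i; exact CCQ q A hq (f i)
theorem CCQ_3 (hq : q ≠ 0) (f : Fin N → Fin N → Fin N → Fin N → Fin N → M) :
    Q₄ (C₃ (C₄ f)) = C₃ (C₄ (Q₃ f)) := by
  funext i; exact CCQ_2 q A hq (f i)
theorem UQ (hq : q ≠ 0) (f : Fin N → Fin N → Fin N → M) : U₁ (Q₂ f) = U₂ (D₁ f) := by
  rw [← UQC q A hq, CD q A hq]
theorem UQ_2 (hq : q ≠ 0) (f : Fin N → Fin N → Fin N → Fin N → M) : U₂ (Q₃ f) = U₃ (D₂ f) := by
  funext i; exact UQ q A hq (f i)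
theorem UQ_3 (hq : q ≠ 0) (f : Fin N → Fin N → Fin N → Fin N → Fin N → M) :
    U₃ (Q₄ f) = U₄ (D₃ f) := by
  funext i; exact UQ_2 q A hq (f i)
theorem UQC_2 (hq : q ≠ 0) (f : Fin N → Fin N → Fin N → Fin N → M) :
    U₂ (Q₃ (C₂ f)) = U₃ f := by
  funext i; exact UQC q A hq (f i)
theorem UQC_3 (hq : q ≠ 0) (f : Fin N → Fin N → Fin N → Fin N → Fin N → M) :
    U₃ (Q₄ (C₃ f)) = U₄ f := by
  funext i; exact UQC_2 q A hq (f i)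
theorem UDP_2 (hq : q ≠ 0) (f : Fin N → Fin N → Fin N → Fin N → M) :
    U₂ (D₃ (P₂ f)) = U₃ f := by
  funext i; exact UDP q A hq (f i)
theorem KCQ (hq : q ≠ 0) (f : Fin N → Fin N → Fin N → M) : K₁ (C₂ (Q₁ f)) = K₂ f := by
  rw [← UC q A hq, ← CCQ q A hq, UQC q A hq, UC_2 q A hq]
theorem KCQ_2 (hq : q ≠ 0) (f : Fin N → Fin N → Fin N → Fin N → M) : K₂ (C₃ (Q₂ f)) = K₃ f := by
  funext i; exact KCQ q A hq (f i)
theorem KCQ_3 (hq : q ≠ 0) (f : Fin N → Fin N → Fin N → Fin N → Fin N → M) :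
    K₃ (C₄ (Q₃ f)) = K₄ f := by
  funext i; exact KCQ_2 q A hq (f i)
theorem KP (hq : q ≠ 0) (f : Fin N → Fin N → Fin N → M) : K₁ (P₂ f) = K₂ (C₁ f) := by
  rw [← UC q A hq, ← UC_2 q A hq, ← UDP q A hq, CCP q A hq, DC_2 q A hq]
theorem KP_2 (hq : q ≠ 0) (f : Fin N → Fin N → Fin N → Fin N → M) : K₂ (P₃ f) = K₃ (C₂ f) := by
  funext i; exact KP q A hq (f i)
theorem PPP_1 (hq : q ≠ 0) (f : Fin N → Fin N → Fin N → M) : P₁ (P₂ (P₁ f)) = P₂ (P₁ (P₂ f)) :=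
  PPP q A hq f
theorem QQQ_2 (hq : q ≠ 0) (f : Fin N → Fin N → Fin N → Fin N → M) :
    Q₂ (Q₃ (Q₂ f)) = Q₃ (Q₂ (Q₃ f)) := by
  funext i; exact QQQ q A hq (f i)
theorem QQQ_3 (hq : q ≠ 0) (f : Fin N → Fin N → Fin N → Fin N → Fin N → M) :
    Q₃ (Q₄ (Q₃ f)) = Q₄ (Q₃ (Q₄ f)) := by
  funext i; exact QQQ_2 q A hq (f i)
theorem QQQ_4 (hq : q ≠ 0) (f : Fin N → Fin N → Fin N → Fin N → Fin N → Fin N → M) :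
    Q₄ (Q₅ (Q₄ f)) = Q₅ (Q₄ (Q₅ f)) := by
  funext i; exact QQQ_3 q A hq (f i)
theorem DDP_2 (hq : q ≠ 0) (f : Fin N → Fin N → Fin N → Fin N → M) :
    D₂ (D₃ (P₂ f)) = P₃ (D₂ (D₃ f)) := by
  funext i; exact DDP q A hq (f i)
theorem QDD_2 (hq : q ≠ 0) (f : Fin N → Fin N → Fin N → Fin N → M) :
    Q₂ (D₃ (D₂ f)) = D₃ (D₂ (Q₃ f)) := by
  funext i; exact QDD q A hq (f i)
theorem QDD_3 (hq : q ≠ 0) (f : Fin N → Fin N → Fin N → Fin N → Fin N → M) :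
    Q₃ (D₄ (D₃ f)) = D₄ (D₃ (Q₄ f)) := by
  funext i; exact QDD_2 q A hq (f i)
theorem CQD_3 (hq : q ≠ 0) (f : Fin N → Fin N → Fin N → Fin N → Fin N → M) :
    C₄ (Q₃ (D₄ f)) = D₃ (Q₄ (C₃ f)) := by
  have h := QDD_3 q A hq (C₃ f)
  rw [DC_3 q A hq] at h
  rw [h, CD_4 q A hq]
theorem Q_hecke_3 (hq : q ≠ 0) (f : Fin N → Fin N → Fin N → Fin N → M) :
    pw q 2 • Q₃ (Q₃ f) = f + (pw q 2 - 1) • Q₃ f := by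
  funext i j; exact Q_hecke q A hq (f i j)
theorem UU (f : Fin N → Fin N → Fin N → Fin N → M) : U₁ (U₃ f) = U₁ (U₁ f) := by
  rw [farU]
theorem nPQ (hq : q ≠ 0) (f : Fin N → Fin N → Fin N → Fin N → M) :
    U₁ (U₂ (P₁ (Q₃ f))) = U₁ (U₂ f) := by
  rw [far, UQ_2 q A hq, UU, UDP q A hq]

/-- left multiplication by the generators -/
def xm {A : Type} [Ring A] {M : Type} [AddCommMonoid M] [Module A M]
    (x : Fin N → Fin N → A) (f : M) : Fin N → Fin N → M := fun i j => x i j • f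

variable {A} in
theorem xm_nat (x : Fin N → Fin N → A) (h : M →ₗ[A] M') (f : M) :
    xm x (h f) = tS (tS h) (xm x f) := by
  funext i j; simp only [xm, tS_apply, map_smul]

variable {A} in
theorem xm_add (x : Fin N → Fin N → A) (f g : M) : xm x (f + g) = xm x f + xm x g := by
  funext i j; simp only [xm, Pi.add_apply, smul_add]

variable {A} in
theorem xm_zero (x : Fin N → Fin N → A) : xm x (0 : M) = 0 := by
  funext i j; simp only [xm, Pi.zero_apply, smul_zero]

variable {A} in
theorem xm_csmul (x : Fin N → Fin N → A) (c : ℂ) (f : M) : xm x (c • f) = c • xm x f := by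
  funext i j; simp only [xm, Pi.smul_apply, smul_comm c]

/-- the relations of quantum projective space in tensor form -/
structure Hx (x : Fin N → Fin N → A) : Prop where
  m : P₁ (C₂ (fun i j k l => x i j * x k l)) = C₂ (fun i j k l => x i j * x k l)
  c : Q₃ (C₂ (fun i j k l => x i j * x k l)) = C₂ (fun i j k l => x i j * x k l)
  u : ∑ k, x k k = 1

variable {q A} {x : Fin N → Fin N → A}

theorem xmxm (x : Fin N → Fin N → A) (f : M) : xm x (xm x f) =
    tS (tS (tS (tS (LinearMap.toSpanSingleton A M f)))) (fun i j k l => x i j * x k l) := by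
  funext i j k l
  simp [xm, tS_apply, mul_smul]

theorem Hx.m' (hx : Hx q A x) (f : M) : P₁ (C₂ (xm x (xm x f))) = C₂ (xm x (xm x f)) := by
  rw [xmxm, far_2, far, hx.m]

theorem Hx.c' (hx : Hx q A x) (f : M) : Q₃ (C₂ (xm x (xm x f))) = C₂ (xm x (xm x f)) := by
  rw [xmxm, far_2]
  rw [far_3, hx.c]

theorem Hx.u' (hx : Hx q A x) (f : M) : U₁ (xm x f) = f := by
  rw [tU_apply]
  simp only [xm, ← Finset.sum_smul, hx.u, one_smul]

theorem Hx.p (hx : Hx q A x) (hq : q ≠ 0) (f : M) : K₂ (xm x (xm x f)) = xm x f := by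
  rw [← UC_2 q A hq, ← UDP q A hq, hx.m', DC_2 q A hq, hx.u']

end Deriv
section Calc
set_option linter.unusedSectionVars false
variable {N : ℕ} {q : ℝ} {A : Type} [Ring A] [Algebra ℂ A]
variable {G : Type} [AddCommGroup G] [Module ℂ G] [Module A G] [IsScalarTower ℂ A G]

local notation "P₁" => tL A (cP q)
local notation "P₂" => tS P₁
local notation "P₃" => tS P₂
local notation "P₄" => tS P₃
local notation "Q₁" => tL A (cQ q)
local notation "Q₂" => tS Q₁
local notation "Q₃" => tS Q₂
local notation "Q₄" => tS Q₃
local notation "Q₅" => tS Q₄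
local notation "C₁" => tL A (cC q)
local notation "C₂" => tS C₁
local notation "C₃" => tS C₂
local notation "C₄" => tS C₃
local notation "D₁" => tL A (cD q)
local notation "D₂" => tS D₁
local notation "D₃" => tS D₂
local notation "D₄" => tS D₃
local notation "U₁" => tU A
local notation "U₂" => tS U₁
local notation "U₃" => tS U₂
local notation "U₄" => tS U₃
local notation "K₁" => tN A q
local notation "K₂" => tS K₁
local notation "K₃" => tS K₂
local notation "K₄" => tS K₃

variable (q) in
/-- first component of a one-form tensor -/
def E1 (x : Fin N → Fin N → A) (e : Fin N → Fin N → G) : Fin N → Fin N → G := K₂ (xm x e)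

variable (q) in
/-- second component of a one-form tensor -/
def E2 (x : Fin N → Fin N → A) (e : Fin N → Fin N → G) : Fin N → Fin N → G :=
  pw q (-2) • U₂ (P₁ (Q₃ (C₂ (xm x e))))

variable (q) in
/-- the relations of the calculus in tensor form -/
structure He (x : Fin N → Fin N → A) (e : Fin N → Fin N → G) : Prop where
  k1 : U₁ (E1 q x e) = 0
  k2 : e = E1 q x e + E2 q x e

variable {x : Fin N → Fin N → A} {e : Fin N → Fin N → G}

theorem E1_add (x : Fin N → Fin N → A) (e e' : Fin N → Fin N → G) :
    E1 q x (e + e') = E1 q x e + E1 q x e' := by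
  unfold E1; rw [xm_add, map_add]

theorem E2_add (x : Fin N → Fin N → A) (e e' : Fin N → Fin N → G) :
    E2 q x (e + e') = E2 q x e + E2 q x e' := by
  unfold E2; rw [xm_add, map_add, map_add, map_add, map_add, smul_add]

theorem xmE1 : xm x (E1 q x e) = K₄ (xm x (xm x e)) := by
  unfold E1; rw [xm_nat]

theorem L3 (hx : Hx q A x) : P₁ (C₂ (xm x (E1 q x e))) = C₂ (xm x (E1 q x e)) := by
  rw [xmE1, far_2, far, hx.m']

theorem L4 (hx : Hx q A x) (hq : q ≠ 0) : E1 q x (E1 q x e) = E1 q x e := by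
  rw [E1, xmE1, farN_2, hx.p hq, E1]

theorem L5 (hx : Hx q A x) (hq : q ≠ 0) (he : He q x e) : E1 q x (E2 q x e) = 0 := by
  have h : E1 q x e = E1 q x (E1 q x e) + E1 q x (E2 q x e) := by
    rw [← E1_add, ← he.k2]
  rw [L4 hx hq] at h
  exact left_eq_add.mp h

theorem U3E1 (he : He q x e) : U₃ (xm x (E1 q x e)) = 0 := by
  rw [← xm_nat, he.k1, xm_zero]

theorem L6 (hx : Hx q A x) (hq : q ≠ 0) (he : He q x e) : E2 q x (E1 q x e) = 0 := by
  rw [E2, far, L3 hx, UQC_2 q A hq, U3E1 he, smul_zero]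

theorem L7 (hx : Hx q A x) (hq : q ≠ 0) (he : He q x e) : E2 q x (E2 q x e) = E2 q x e := by
  have h : E2 q x e = E2 q x (E1 q x e) + E2 q x (E2 q x e) := by
    rw [← E2_add, ← he.k2]
  rw [L6 hx hq he, zero_add] at h
  exact h.symm

theorem xmE2 : xm x (E2 q x e) = pw q (-2) • U₄ (P₃ (Q₅ (C₄ (xm x (xm x e))))) := by
  unfold E2; rw [xm_csmul, xm_nat, xm_nat, xm_nat, xm_nat]

theorem L3' (hx : Hx q A x) (hq : q ≠ 0) :
    Q₃ (C₂ (xm x (E2 q x e))) = C₂ (xm x (E2 q x e)) := by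
  rw [xmE2, h_csmul, h_csmul, far_2, ← UQC_3 q A hq, ← farU_3]
  congr 2
  set W := xm x (xm x e) with hW
  have hT : Q₄ (C₃ (C₂ (P₃ (Q₅ (C₄ W))))) = Q₄ (Q₅ (P₂ (C₃ (C₄ (C₂ W))))) := by
    rw [far_3, far_2, far_3, ← CCP_2 q A hq, far_2]
  have hV : Q₄ (P₂ (C₃ (C₄ (C₂ W)))) = P₂ (C₃ (C₄ (C₂ W))) := by
    rw [← far_2, CCQ_3 q A hq, hW, hx.c']
  rw [hT, ← QQQ_4 q A hq, hV]

theorem L8 (hq : q ≠ 0) (he : He q x e) : U₁ e = 0 := by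
  have h : U₁ e = U₁ (E1 q x e) + U₁ (E2 q x e) := by rw [← map_add, ← he.k2]
  rw [h, he.k1, zero_add, E2, h_csmul, nPQ q A hq, UC_2 q A hq]
  have := he.k1
  rw [E1] at this
  rw [this, smul_zero]

theorem L9 (hx : Hx q A x) (hq : q ≠ 0) (he : He q x e) :
    U₁ (D₂ (Q₃ (C₂ (xm x (E1 q x e))))) = 0 := by
  rw [← L3 hx, ← far, UDP q A hq, UQC_2 q A hq, U3E1 he]

variable (q) in
/-- right multiplication on the first component -/
def B1 (x : Fin N → Fin N → A) (e : Fin N → Fin N → G) : Fin N → Fin N → Fin N → Fin N → G :=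
  pw q 2 • D₂ (Q₃ (C₂ (xm x (E1 q x e))))
variable (q) in
/-- right multiplication on the second component -/
def B2 (x : Fin N → Fin N → A) (e : Fin N → Fin N → G) : Fin N → Fin N → Fin N → Fin N → G :=
  pw q (-2) • D₂ (P₁ (C₂ (xm x (E2 q x e))))

theorem UB1 (hx : Hx q A x) (hq : q ≠ 0) (he : He q x e) : U₁ (B1 q x e) = 0 := by
  rw [B1, h_csmul, L9 hx hq he, smul_zero]

theorem xmB1 : xm x (B1 q x e) = pw q 2 • D₄ (Q₅ (C₄ (xm x (xm x (E1 q x e))))) := by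
  unfold B1; rw [xm_csmul, xm_nat, xm_nat, xm_nat]

theorem xmB2 : xm x (B2 q x e) = pw q (-2) • D₄ (P₃ (C₄ (xm x (xm x (E2 q x e))))) := by
  unfold B2; rw [xm_csmul, xm_nat, xm_nat, xm_nat]

theorem VA1 (hx : Hx q A x) (hq : q ≠ 0) : K₂ (xm x (B1 q x e)) = B1 q x e := by
  rw [xmB1, h_csmul, farN_2, farN_2, farN_2, hx.p hq, B1]

theorem VA2 (hx : Hx q A x) (hq : q ≠ 0) (he : He q x e) : K₂ (xm x (B2 q x e)) = 0 := by
  rw [xmB2, h_csmul, farN_2, KP_2 q A hq, far_2, ← hx.c', KCQ_3 q A hq, ← far_2, ← xm_nat]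
  have := L5 hx hq he
  rw [E1] at this
  rw [this, xm_zero, map_zero, map_zero, smul_zero]

theorem VB1 (hx : Hx q A x) (hq : q ≠ 0) (he : He q x e) :
    U₂ (P₁ (Q₃ (C₂ (xm x (B1 q x e))))) = 0 := by
  rw [xmB1, h_csmul, h_csmul, h_csmul, h_csmul]
  rw [far, far_2, far_2, far_2, far, far, far, hx.m', ← far_2, ← far_2, ← far_2, UQC_2 q A hq,
    ← xm_nat, ← xm_nat, ← xm_nat, ← xm_nat, L9 hx hq he, xm_zero, smul_zero]

/-- the tensor `P₁ P₂ C₃ C₂ C₄ x x e²` -/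
theorem Q5C4 (hx : Hx q A x) (hq : q ≠ 0) :
    Q₅ (C₄ (xm x (xm x (E2 q x e)))) = C₄ (xm x (xm x (E2 q x e))) := by
  rw [← xm_nat, ← xm_nat, L3' hx hq]

theorem P3C4 (hx : Hx q A x) :
    P₃ (C₄ (xm x (xm x (E1 q x e)))) = C₄ (xm x (xm x (E1 q x e))) := by
  rw [← xm_nat, ← xm_nat, L3 hx]

variable (q) in
def tG (x : Fin N → Fin N → A) (e : Fin N → Fin N → G) :
    Fin N → Fin N → Fin N → Fin N → Fin N → Fin N → G :=
  C₃ (C₂ (C₄ (xm x (xm x e))))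
variable (q) in
def tF (x : Fin N → Fin N → A) (e : Fin N → Fin N → G) :
    Fin N → Fin N → Fin N → Fin N → Fin N → Fin N → G :=
  P₁ (P₂ (tG q x e))

theorem P1G (hx : Hx q A x) (e : Fin N → Fin N → G) : P₁ (tG q x e) = tG q x e := by
  rw [tG, far, far_2, far, hx.m']
theorem Q4G (hx : Hx q A x) (hq : q ≠ 0) (e : Fin N → Fin N → G) : Q₄ (tG q x e) = tG q x e := by
  rw [tG, far_2, CCQ_3 q A hq, hx.c']
theorem Q4F (hx : Hx q A x) (hq : q ≠ 0) (e : Fin N → Fin N → G) : Q₄ (tF q x e) = tF q x e := by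
  rw [tF, ← far, ← far_2, Q4G hx hq]
theorem P2F (hx : Hx q A x) (hq : q ≠ 0) (e : Fin N → Fin N → G) : P₂ (tF q x e) = tF q x e := by
  rw [tF, ← PPP_1 q A hq, P1G hx]
theorem C2P3C4 (hq : q ≠ 0) (e : Fin N → Fin N → G) :
    C₂ (P₃ (C₄ (xm x (xm x e)))) = D₃ (P₂ (tG q x e)) := by
  rw [CP_2 q A hq, tG]

theorem VB2 (hx : Hx q A x) (hq : q ≠ 0) (he : He q x e) :
    pw q (-2) • U₂ (P₁ (Q₃ (C₂ (xm x (B2 q x e))))) = B2 q x e := by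
  have hL : U₂ (P₁ (Q₃ (C₂ (xm x (B2 q x e))))) = pw q (-2) • D₂ (U₃ (tF q x (E2 q x e))) := by
    rw [xmB2, h_csmul, h_csmul, h_csmul, h_csmul, far_2, C2P3C4 hq, QDD_3 q A hq, ← far_2,
      Q4G hx hq, far, far, ← tF, farU_2]
    nth_rewrite 1 [← P2F hx hq]
    rw [UDP_2 q A hq]
  have hR : xm x (E2 q x e) = pw q (-2) • U₄ (P₃ (C₄ (xm x (xm x (E2 q x e))))) := by
    nth_rewrite 1 [← L7 hx hq he]
    rw [xmE2, Q5C4 hx hq]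
  rw [hL, B2, hR, h_csmul, h_csmul, h_csmul, far_2, C2P3C4 hq, far, far, ← tF, ← UQ_3 q A hq,
    Q4F hx hq]

/-! the module relations -/
theorem CB1 (hq : q ≠ 0) : C₂ (B1 q x e) = pw q 2 • Q₃ (C₂ (xm x (E1 q x e))) := by
  rw [B1, h_csmul, CD_2 q A hq]
theorem CB2 (hq : q ≠ 0) : C₂ (B2 q x e) = pw q (-2) • P₁ (C₂ (xm x (E2 q x e))) := by
  rw [B2, h_csmul, CD_2 q A hq]

theorem UB1' (hx : Hx q A x) (hq : q ≠ 0) (he : He q x e) : U₃ (B1 q x e) = E1 q x e := by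
  rw [B1, h_csmul, ← UQ_2 q A hq, ← h_csmul, Q_hecke_3 q A hq, map_add, h_csmul, UQC_2 q A hq,
    U3E1 he, smul_zero, add_zero, UC_2 q A hq, ← E1, L4 hx hq]

theorem UB2' (hx : Hx q A x) (hq : q ≠ 0) (he : He q x e) : U₃ (B2 q x e) = E2 q x e := by
  rw [B2, h_csmul, ← UQ_2 q A hq, ← far, ← E2, L7 hx hq he]

theorem dP (hx : Hx q A x) (hq : q ≠ 0) (he : He q x e) :
    P₁ (C₂ (B1 q x e + B2 q x e + xm x e)) = C₂ (B1 q x e + B2 q x e + xm x e) := by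
  have h : xm x e = xm x (E1 q x e) + xm x (E2 q x e) := by rw [← xm_add, ← he.k2]
  have h2 := P_hecke q A hq (C₂ (xm x (E2 q x e)))
  rw [h]
  simp only [map_add, CB1 hq, CB2 hq, h_csmul]
  rw [h2, far, L3 hx]
  module

theorem dQ (hx : Hx q A x) (hq : q ≠ 0) (he : He q x e) :
    Q₃ (C₂ (B1 q x e + B2 q x e + xm x e)) = C₂ (B1 q x e + B2 q x e + xm x e) := by
  have h : xm x e = xm x (E1 q x e) + xm x (E2 q x e) := by rw [← xm_add, ← he.k2]
  have h2 := Q_hecke_3 q A hq (C₂ (xm x (E1 q x e)))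
  rw [h]
  simp only [map_add, CB1 hq, CB2 hq, h_csmul]
  rw [h2, ← far, L3' hx hq]
  module

variable {ρ : G →ₗ[A] (Fin N → Fin N → G)}

theorem B1x (h : tS (tS ρ) (E1 q x e) = B1 q x e) : tS (tS (tS (tS ρ))) (B1 q x e)
    = (pw q 2 * pw q 2) • D₂ (Q₃ (C₂ (D₄ (Q₅ (C₄ (xm x (xm x (E1 q x e)))))))) := by
  conv_lhs => rw [B1]
  rw [h_csmul, ← far_2, ← far_3, ← far_2, ← xm_nat, h, xmB1]
  simp only [h_csmul, smul_smul]

theorem B2x (h : tS (tS ρ) (E2 q x e) = B2 q x e) : tS (tS (tS (tS ρ))) (B2 q x e)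
    = (pw q (-2) * pw q (-2)) • D₂ (P₁ (C₂ (D₄ (P₃ (C₄ (xm x (xm x (E2 q x e)))))))) := by
  conv_lhs => rw [B2]
  rw [h_csmul, ← far_2, ← far, ← far_2, ← xm_nat, h, xmB2]
  simp only [h_csmul, smul_smul]

theorem CB1x (hq : q ≠ 0) (h : tS (tS ρ) (E1 q x e) = B1 q x e) :
    C₄ (tS (tS (tS (tS ρ))) (B1 q x e))
    = (pw q 2 * pw q 2) • D₂ (D₃ (Q₄ (Q₅ (tG q x (E1 q x e))))) := by
  rw [B1x h, h_csmul, ← far_2 (cD q), far_2 (cC q), CQD_3 q A hq, far_2 (cC q), far_3 (cC q), tG]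

theorem CB2x (hq : q ≠ 0) (h : tS (tS ρ) (E2 q x e) = B2 q x e) :
    C₄ (tS (tS (tS (tS ρ))) (B2 q x e))
    = (pw q (-2) * pw q (-2)) • D₂ (D₃ (tF q x (E2 q x e))) := by
  rw [B2x h, h_csmul, ← far_2, ← far, ← far_2, CD_4 q A hq, C2P3C4 hq, far, ← tF]

theorem PB1x (hx : Hx q A x) (hq : q ≠ 0) (h : tS (tS ρ) (E1 q x e) = B1 q x e) :
    P₃ (C₄ (tS (tS (tS (tS ρ))) (B1 q x e))) = C₄ (tS (tS (tS (tS ρ))) (B1 q x e)) := by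
  rw [CB1x hq h, h_csmul, ← DDP_2 q A hq, far_2, far_2]
  conv_lhs => rw [tG, CCP_2 q A hq, P3C4 hx, ← tG]

theorem QB1x (hx : Hx q A x) (hq : q ≠ 0) (h : tS (tS ρ) (E1 q x e) = B1 q x e) :
    Q₅ (C₄ (tS (tS (tS (tS ρ))) (B1 q x e))) = C₄ (tS (tS (tS (tS ρ))) (B1 q x e)) := by
  rw [CB1x hq h, h_csmul, ← far_2, ← far_3, ← QQQ_4 q A hq, Q4G hx hq]

theorem PB2x (hx : Hx q A x) (hq : q ≠ 0) (h : tS (tS ρ) (E2 q x e) = B2 q x e) :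
    P₃ (C₄ (tS (tS (tS (tS ρ))) (B2 q x e))) = C₄ (tS (tS (tS (tS ρ))) (B2 q x e)) := by
  rw [CB2x hq h, h_csmul, ← DDP_2 q A hq, P2F hx hq]

theorem QB2x (hx : Hx q A x) (hq : q ≠ 0) (h : tS (tS ρ) (E2 q x e) = B2 q x e) :
    Q₅ (C₄ (tS (tS (tS (tS ρ))) (B2 q x e))) = C₄ (tS (tS (tS (tS ρ))) (B2 q x e)) := by
  rw [CB2x hq h, h_csmul, ← far_2, ← far_3, tF, ← far, ← far_2]
  conv_lhs => rw [tG, ← far_3, ← far_2, Q5C4 hx hq, ← tG]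

end Calc
section Entries
set_option linter.unusedSectionVars false
variable {N : ℕ} (q : ℝ) (A : Type) [Ring A] [Algebra ℂ A]
variable {M : Type} [AddCommMonoid M] [Module ℂ M] [Module A M] [IsScalarTower ℂ A M]

local notation "P₁" => tL A (cP q)
local notation "P₂" => tS P₁
local notation "P₃" => tS P₂
local notation "P₄" => tS P₃
local notation "Q₁" => tL A (cQ q)
local notation "Q₂" => tS Q₁
local notation "Q₃" => tS Q₂
local notation "Q₄" => tS Q₃
local notation "Q₅" => tS Q₄
local notation "C₁" => tL A (cC q)
local notation "C₂" => tS C₁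
local notation "C₃" => tS C₂
local notation "C₄" => tS C₃
local notation "D₁" => tL A (cD q)
local notation "D₂" => tS D₁
local notation "D₃" => tS D₂
local notation "D₄" => tS D₃
local notation "U₁" => tU A
local notation "U₂" => tS U₁
local notation "U₃" => tS U₂
local notation "U₄" => tS U₃
local notation "K₁" => tN A q
local notation "K₂" => tS K₁
local notation "K₃" => tS K₂
local notation "K₄" => tS K₃

theorem DPC_apply (hq : q ≠ 0) (f : Fin N → Fin N → Fin N → Fin N → M) (i j k l : Fin N) :
    D₂ (P₁ (C₂ f)) i j k l = (q : ℂ) • ∑ s : Fin N, ∑ t : Fin N, ∑ u : Fin N, ∑ v : Fin N,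
      RCPm q s t u v i j k l • f s t u v := by
  have h : ∀ s t u : Fin N, ∑ v : Fin N, RCPm q s t u v i j k l • f s t u v
      = (∑ a : Fin N, ∑ b : Fin N, ∑ c : Fin N, Rlm q t u a b * Rminus q s a i c * Rr q c b j k)
        • f s t u l := by
    intro s t u
    rw [Finset.sum_eq_single l]
    · simp [RCPm]
    · intro v _ hv; simp [RCPm, hv]
    · simp
  have hq' : (q : ℂ) ≠ 0 := by exact_mod_cast hq
  simp only [h]
  simp only [tL_apply, tS_apply, Finset.sum_apply, Pi.smul_apply, Finset.smul_sum, Finset.sum_smul,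
    smul_smul]
  simp only [← Fintype.sum_prod_type']
  refine Fintype.sum_equiv ⟨fun ⟨c, b, s, a, t, u⟩ => (s, t, u, a, b, c),
    fun ⟨s, t, u, a, b, c⟩ => (c, b, s, a, t, u),
    fun ⟨_, _, _, _, _, _⟩ => rfl, fun ⟨_, _, _, _, _, _⟩ => rfl⟩ _ _ ?_
  intro ⟨c, b, s, a, t, u⟩
  simp only [Equiv.coe_fn_mk, cP, cC, cD]
  congr 1
  field_simp

theorem DQC_apply (hq : q ≠ 0) (f : Fin N → Fin N → Fin N → Fin N → M) (i j k l : Fin N) :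
    D₂ (Q₃ (C₂ f)) i j k l = (q : ℂ)⁻¹ • ∑ s : Fin N, ∑ t : Fin N, ∑ u : Fin N, ∑ v : Fin N,
      RCPc q s t u v i j k l • f s t u v := by
  have hq' : (q : ℂ) ≠ 0 := by exact_mod_cast hq
  rw [Finset.sum_eq_single i]
  rotate_left
  · intro s _ hs; simp [RCPc, hs]
  · simp
  simp only [RCPc, if_true, one_mul]
  simp only [tL_apply, tS_apply, Finset.sum_apply, Pi.smul_apply, Finset.smul_sum, Finset.sum_smul,
    smul_smul]
  simp only [← Fintype.sum_prod_type']
  refine Fintype.sum_equiv ⟨fun ⟨a, c, b, v, t, u⟩ => (t, u, v, a, b, c),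
    fun ⟨t, u, v, a, b, c⟩ => (a, c, b, v, t, u),
    fun ⟨_, _, _, _, _, _⟩ => rfl, fun ⟨_, _, _, _, _, _⟩ => rfl⟩ _ _ ?_
  intro ⟨a, c, b, v, t, u⟩
  simp only [Equiv.coe_fn_mk, cQ, cC, cD]
  congr 1
  field_simp

theorem UPQC_apply (hq : q ≠ 0) (f : Fin N → Fin N → Fin N → Fin N → M) (i j : Fin N) :
    U₂ (P₁ (Q₃ (C₂ f))) i j = (q : ℂ) • ∑ a : Fin N, ∑ b : Fin N, ∑ c : Fin N, ∑ s : Fin N,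
      ∑ t : Fin N, ∑ u : Fin N, ∑ v : Fin N,
      (Rlm q t u b c * Rminus q s b i a * Rc q c v a j) • f s t u v := by
  have hq' : (q : ℂ) ≠ 0 := by exact_mod_cast hq
  simp only [tL_apply, tS_apply, tU_apply, Finset.sum_apply, Pi.smul_apply, Finset.smul_sum,
    smul_smul]
  simp only [← Fintype.sum_prod_type']
  refine Fintype.sum_equiv ⟨fun ⟨a, s, b, c, v, t, u⟩ => (a, b, c, s, t, u, v),
    fun ⟨a, b, c, s, t, u, v⟩ => (a, s, b, c, v, t, u),
    fun ⟨_, _, _, _, _, _, _⟩ => rfl, fun ⟨_, _, _, _, _, _, _⟩ => rfl⟩ _ _ ?_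
  intro ⟨a, s, b, c, v, t, u⟩
  simp only [Equiv.coe_fn_mk, cP, cQ, cC]
  congr 1
  field_simp

theorem relm_of (hq : q ≠ 0) (f : Fin N → Fin N → Fin N → Fin N → M) (h : P₁ (C₂ f) = C₂ f)
    (i j k l : Fin N) : ∑ s : Fin N, ∑ t : Fin N, ∑ u : Fin N, ∑ v : Fin N,
      RCPm q s t u v i j k l • f s t u v = (q : ℂ)⁻¹ • f i j k l := by
  have hq' : (q : ℂ) ≠ 0 := by exact_mod_cast hq
  have h1 := DPC_apply q A hq f i j k l
  rw [h, DC_2 q A hq] at h1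
  rw [h1, smul_smul, inv_mul_cancel₀ hq', one_smul]

theorem relc_of (hq : q ≠ 0) (f : Fin N → Fin N → Fin N → Fin N → M) (h : Q₃ (C₂ f) = C₂ f)
    (i j k l : Fin N) : ∑ s : Fin N, ∑ t : Fin N, ∑ u : Fin N, ∑ v : Fin N,
      RCPc q s t u v i j k l • f s t u v = (q : ℂ) • f i j k l := by
  have hq' : (q : ℂ) ≠ 0 := by exact_mod_cast hq
  have h1 := DQC_apply q A hq f i j k l
  rw [h, DC_2 q A hq] at h1
  rw [h1, smul_smul, mul_inv_cancel₀ hq', one_smul]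

theorem of_relm (hq : q ≠ 0) (f : Fin N → Fin N → Fin N → Fin N → M)
    (h : ∀ i j k l : Fin N, ∑ s : Fin N, ∑ t : Fin N, ∑ u : Fin N, ∑ v : Fin N,
      RCPm q s t u v i j k l • f s t u v = (q : ℂ)⁻¹ • f i j k l) : P₁ (C₂ f) = C₂ f := by
  have hq' : (q : ℂ) ≠ 0 := by exact_mod_cast hq
  have h1 : D₂ (P₁ (C₂ f)) = f := by
    funext i j k l
    rw [DPC_apply q A hq, h, smul_smul, mul_inv_cancel₀ hq', one_smul]
  rw [← CD_2 q A hq (P₁ (C₂ f)), h1]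

theorem of_relc (hq : q ≠ 0) (f : Fin N → Fin N → Fin N → Fin N → M)
    (h : ∀ i j k l : Fin N, ∑ s : Fin N, ∑ t : Fin N, ∑ u : Fin N, ∑ v : Fin N,
      RCPc q s t u v i j k l • f s t u v = (q : ℂ) • f i j k l) : Q₃ (C₂ f) = C₂ f := by
  have hq' : (q : ℂ) ≠ 0 := by exact_mod_cast hq
  have h1 : D₂ (Q₃ (C₂ f)) = f := by
    funext i j k l
    rw [DQC_apply q A hq, h, smul_smul, inv_mul_cancel₀ hq', one_smul]
  rw [← CD_2 q A hq (Q₃ (C₂ f)), h1]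

end Entries

section Lift
variable {N : ℕ} {q : ℝ} {B : Type} [Semiring B] [Algebra ℂ B]

/-- algebra maps out of quantum projective space -/
def cpLift (y : Fin N → Fin N → B)
    (hm : ∀ i j k l : Fin N, ∑ s : Fin N, ∑ t : Fin N, ∑ u : Fin N, ∑ v : Fin N,
      RCPm q s t u v i j k l • (y s t * y u v) = (q : ℂ)⁻¹ • (y i j * y k l))
    (hc : ∀ i j k l : Fin N, ∑ s : Fin N, ∑ t : Fin N, ∑ u : Fin N, ∑ v : Fin N,
      RCPc q s t u v i j k l • (y s t * y u v) = (q : ℂ) • (y i j * y k l))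
    (hu : ∑ i : Fin N, y i i = 1) : CPq q N →ₐ[ℂ] B :=
  RingQuot.liftAlgHom ℂ ⟨FreeAlgebra.lift ℂ (fun p : Fin N × Fin N => y p.1 p.2), by
    intro a b h
    cases h with
    | relm i j k l => simpa only [gen, map_sum, map_smul, map_mul, FreeAlgebra.lift_ι_apply] using hm i j k l
    | relc i j k l => simpa only [gen, map_sum, map_smul, map_mul, FreeAlgebra.lift_ι_apply] using hc i j k l
    | relu => simpa [gen] using hu⟩

theorem cpLift_X (y : Fin N → Fin N → B) (hm hc hu) (i j : Fin N) :
    cpLift (q := q) y hm hc hu (X q i j) = y i j := by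
  simp [cpLift, X, gen]

theorem HxX (hq : q ≠ 0) : Hx q (CPq q N) (X q) where
  m := of_relm q (CPq q N) hq _ fun i j k l => by
    have := RingQuot.mkAlgHom_rel ℂ (CPrel.relm (q := q) i j k l)
    simp only [map_sum, map_smul, map_mul] at this
    exact this
  c := of_relc q (CPq q N) hq _ fun i j k l => by
    have := RingQuot.mkAlgHom_rel ℂ (CPrel.relc (q := q) i j k l)
    simp only [map_sum, map_smul, map_mul] at this
    exact this
  u := by
    have := RingQuot.mkAlgHom_rel ℂ (CPrel.relu (q := q) (N := N))
    simp only [map_sum, map_one] at this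
    exact this

theorem cp_hom_ext {f g : CPq q N →ₐ[ℂ] B} (h : ∀ i j, f (X q i j) = g (X q i j)) : f = g := by
  apply RingQuot.ringQuot_ext'
  apply FreeAlgebra.hom_ext
  funext p
  exact h p.1 p.2

end Lift
section Make
set_option linter.unusedSectionVars false
variable {N : ℕ} {q : ℝ}
variable {G : Type} [AddCommGroup G] [Module ℂ G] [Module (CPq q N) G] [IsScalarTower ℂ (CPq q N) G]

/-- right multiplication by a generator -/
def rmul (ρ : G →ₗ[CPq q N] (Fin N → Fin N → G)) (k l : Fin N) : Module.End (CPq q N) G :=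
  (LinearMap.proj l).comp ((LinearMap.proj k).comp ρ)

theorem rmul_apply (ρ : G →ₗ[CPq q N] (Fin N → Fin N → G)) (k l : Fin N) (g : G) :
    rmul ρ k l g = ρ g k l := rfl

theorem exists_right (hq : q ≠ 0) (e : Fin N → Fin N → G) (he : He q (X q) e)
    (hs : Submodule.span (CPq q N) (Set.range fun p : Fin N × Fin N => e p.1 p.2) = ⊤)
    (ρ : G →ₗ[CPq q N] (Fin N → Fin N → G))
    (h1 : tS (tS ρ) (E1 q (X q) e) = B1 q (X q) e)
    (h2 : tS (tS ρ) (E2 q (X q) e) = B2 q (X q) e) :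
    ∃ R : CPq q N →ₐ[ℂ] (Module.End (CPq q N) G)ᵐᵒᵖ,
      ∀ i j k l, (R (X q k l)).unop (e i j) = (B1 q (X q) e + B2 q (X q) e) i j k l := by
  have hx : Hx q (CPq q N) (X q) := HxX hq
  have h3 : tS (tS ρ) e = B1 q (X q) e + B2 q (X q) e := by
    conv_lhs => rw [he.k2]
    rw [map_add, h1, h2]
  have hP : ∀ i j, tL (CPq q N) (cP q) (tS (tL (CPq q N) (cC q))
      (tS (tS (tS (tS ρ))) (tS (tS ρ) e) i j))
      = tS (tL (CPq q N) (cC q)) (tS (tS (tS (tS ρ))) (tS (tS ρ) e) i j) := by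
    intro i j
    have h4 := congrArg₂ (· + ·) (PB1x hx hq h1) (PB2x hx hq h2)
    simp only [← map_add] at h4
    rw [← h3] at h4
    exact congrFun (congrFun h4 i) j
  have hQ : ∀ i j, tS (tS (tL (CPq q N) (cQ q))) (tS (tL (CPq q N) (cC q))
      (tS (tS (tS (tS ρ))) (tS (tS ρ) e) i j))
      = tS (tL (CPq q N) (cC q)) (tS (tS (tS (tS ρ))) (tS (tS ρ) e) i j) := by
    intro i j
    have h4 := congrArg₂ (· + ·) (QB1x hx hq h1) (QB2x hx hq h2)
    simp only [← map_add] at h4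
    rw [← h3] at h4
    exact congrFun (congrFun h4 i) j
  have hU : ∀ i j, ∑ k, ρ (e i j) k k = e i j := by
    intro i j
    have h4 := congrArg₂ (· + ·) (UB1' hx hq he) (UB2' hx hq he)
    simp only [← map_add] at h4
    rw [← h3, ← he.k2] at h4
    exact congrFun (congrFun h4 i) j
  refine ⟨cpLift (fun k l => MulOpposite.op (rmul ρ k l)) ?_ ?_ ?_, ?_⟩
  · intro i j k l
    apply MulOpposite.unop_injective
    apply LinearMap.ext_on hs
    rintro _ ⟨⟨a, b⟩, rfl⟩
    have := relm_of q (CPq q N) hq _ (hP a b) i j k l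
    simp only [tS_apply] at this
    simp only [Finset.unop_sum, MulOpposite.unop_smul, MulOpposite.unop_mul, MulOpposite.unop_op,
      LinearMap.sum_apply, LinearMap.smul_apply, Module.End.mul_apply, rmul_apply]
    exact this
  · intro i j k l
    apply MulOpposite.unop_injective
    apply LinearMap.ext_on hs
    rintro _ ⟨⟨a, b⟩, rfl⟩
    have := relc_of q (CPq q N) hq _ (hQ a b) i j k l
    simp only [tS_apply] at this
    simp only [Finset.unop_sum, MulOpposite.unop_smul, MulOpposite.unop_mul, MulOpposite.unop_op,
      LinearMap.sum_apply, LinearMap.smul_apply, Module.End.mul_apply, rmul_apply]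
    exact this
  · apply MulOpposite.unop_injective
    apply LinearMap.ext_on hs
    rintro _ ⟨⟨a, b⟩, rfl⟩
    simpa [Finset.unop_sum, LinearMap.sum_apply, rmul_apply] using hU a b
  · intro i j k l
    rw [cpLift_X, ← h3]
    rfl

/-- right module structure from an algebra map -/
abbrev rmod (R : CPq q N →ₐ[ℂ] (Module.End (CPq q N) G)ᵐᵒᵖ) : Module (CPq q N)ᵐᵒᵖ G where
  smul a g := (R a.unop).unop g
  one_smul g := by
    change (R (1 : CPq q N)).unop g = g
    rw [map_one]; rfl
  mul_smul a b g := by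
    change (R (b.unop * a.unop)).unop g = (R a.unop).unop ((R b.unop).unop g)
    rw [map_mul]; rfl
  smul_zero a := map_zero _
  smul_add a g h := map_add _ _ _
  add_smul a b g := by
    change (R (a.unop + b.unop)).unop g = (R a.unop).unop g + (R b.unop).unop g
    rw [map_add]; rfl
  zero_smul g := by
    change (R (0 : CPq q N)).unop g = 0
    rw [map_zero]; rfl

theorem mkFODC (hq : q ≠ 0) (e : Fin N → Fin N → G) (he : He q (X q) e)
    (hs : Submodule.span (CPq q N) (Set.range fun p : Fin N × Fin N => e p.1 p.2) = ⊤)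
    (ρ : G →ₗ[CPq q N] (Fin N → Fin N → G))
    (h1 : tS (tS ρ) (E1 q (X q) e) = B1 q (X q) e)
    (h2 : tS (tS ρ) (E2 q (X q) e) = B2 q (X q) e) :
    ∃ D : FODC (CPq q N), ∃ φ : G ≃ₗ[CPq q N] D.Γ, (∀ i j, D.d (X q i j) = φ (e i j)) ∧
      ∀ i j k l, MulOpposite.op (X q k l) • D.d (X q i j)
        = φ ((B1 q (X q) e + B2 q (X q) e) i j k l) := by
  have hx : Hx q (CPq q N) (X q) := HxX hq
  obtain ⟨R, hR⟩ := exists_right hq e he hs ρ h1 h2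
  let _ : Module (CPq q N)ᵐᵒᵖ G := rmod R
  have hsm : ∀ (a : CPq q N) (g : G), MulOpposite.op a • g = (R a).unop g := fun _ _ => rfl
  have _ : SMulCommClass (CPq q N) (CPq q N)ᵐᵒᵖ G := ⟨fun a b g => by
    change a • (R b.unop).unop g = (R b.unop).unop (a • g)
    rw [map_smul]⟩
  have _ : IsScalarTower ℂ (CPq q N)ᵐᵒᵖ G := ⟨fun c a g => by
    change (R (c • a.unop)).unop g = c • (R a.unop).unop g
    rw [map_smul]; rfl⟩
  let y : Fin N → Fin N → TrivSqZeroExt (CPq q N) G :=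
    fun i j => TrivSqZeroExt.inl (X q i j) + TrivSqZeroExt.inr (e i j)
  have hyf : ∀ i j, (y i j).fst = X q i j := fun i j => by simp [y]
  have hys : ∀ i j, (y i j).snd = e i j := fun i j => by simp [y]
  have hyy : ∀ s t u v, (y s t * y u v).snd
      = (B1 q (X q) e + B2 q (X q) e + xm (X q) e : Fin N → Fin N → Fin N → Fin N → G) s t u v := by
    intro s t u v
    rw [TrivSqZeroExt.snd_mul, hyf, hyf, hys, hys, hsm, hR]
    simp only [Pi.add_apply, xm, Pi.smul_apply]
    abel
  have hyyf : ∀ s t u v, (y s t * y u v).fst = X q s t * X q u v := by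
    intro s t u v
    rw [TrivSqZeroExt.fst_mul, hyf, hyf]
  let T : CPq q N →ₐ[ℂ] TrivSqZeroExt (CPq q N) G := cpLift y (by
      intro i j k l
      apply TrivSqZeroExt.ext
      · simp only [TrivSqZeroExt.fst_sum, TrivSqZeroExt.fst_smul, hyyf]
        exact relm_of q (CPq q N) hq _ hx.m i j k l
      · simp only [TrivSqZeroExt.snd_sum, TrivSqZeroExt.snd_smul, hyy]
        exact relm_of q (CPq q N) hq _ (dP hx hq he) i j k l) (by
      intro i j k l
      apply TrivSqZeroExt.ext
      · simp only [TrivSqZeroExt.fst_sum, TrivSqZeroExt.fst_smul, hyyf]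
        exact relc_of q (CPq q N) hq _ hx.c i j k l
      · simp only [TrivSqZeroExt.snd_sum, TrivSqZeroExt.snd_smul, hyy]
        exact relc_of q (CPq q N) hq _ (dQ hx hq he) i j k l) (by
      apply TrivSqZeroExt.ext
      · simp only [TrivSqZeroExt.fst_sum, hyf, TrivSqZeroExt.fst_one]
        exact hx.u
      · simp only [TrivSqZeroExt.snd_sum, hys, TrivSqZeroExt.snd_one]
        exact L8 hq he)
  have hTX : ∀ i j, T (X q i j) = y i j := fun i j => cpLift_X _ _ _ _ i j
  have hTf : ∀ a, (T a).fst = a := by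
    have : (TrivSqZeroExt.fstHom ℂ (CPq q N) G).comp T = AlgHom.id ℂ _ := by
      apply cp_hom_ext
      intro i j
      change (T (X q i j)).fst = X q i j
      rw [hTX, hyf]
    intro a
    exact DFunLike.congr_fun this a
  have hd : ∀ i j, (T (X q i j)).snd = e i j := fun i j => by rw [hTX, hys]
  refine ⟨{ Γ := G
            d := fun a => (T a).snd
            d_add := fun a b => by rw [map_add, TrivSqZeroExt.snd_add]
            d_smul := fun c a => by rw [map_smul, TrivSqZeroExt.snd_smul]
            leibniz := fun a b => by
              rw [map_mul, TrivSqZeroExt.snd_mul, hTf, hTf, add_comm]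
            spanning := ?_ }, LinearEquiv.refl _ _, hd, ?_⟩
  · set S : Set G := {z : G | ∃ a b : CPq q N, z = a • (T b).snd} with hS
    have hmul : ∀ (a : CPq q N) (g : G), g ∈ Submodule.span ℂ S → a • g ∈ Submodule.span ℂ S := by
      intro a g hg
      induction hg using Submodule.span_induction with
      | mem z hz =>
        obtain ⟨b, c, rfl⟩ := hz
        exact Submodule.subset_span ⟨a * b, c, by rw [mul_smul]⟩
      | zero => rw [smul_zero]; exact zero_mem _
      | add z w _ _ hz hw => rw [smul_add]; exact add_mem hz hw
      | smul c z _ hz => rw [smul_comm]; exact Submodule.smul_mem _ _ hz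
    rw [eq_top_iff]
    intro g _
    have hg : g ∈ Submodule.span (CPq q N) (Set.range fun p : Fin N × Fin N => e p.1 p.2) := by
      rw [hs]; trivial
    induction hg using Submodule.span_induction with
    | mem z hz =>
      obtain ⟨⟨i, j⟩, rfl⟩ := hz
      exact Submodule.subset_span ⟨1, X q i j, by rw [one_smul, hd]⟩
    | zero => exact zero_mem _
    | add z w _ _ hz hw => exact add_mem (hz trivial) (hw trivial)
    | smul a z _ hz => exact hmul a z (hz trivial)
  · intro i j k l
    change MulOpposite.op (X q k l) • (T (X q i j)).snd = _
    rw [hd, hsm, hR]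
    rfl

end Make
section Final
set_option linter.unusedSectionVars false
variable {N : ℕ} {q : ℝ}

theorem E1_nat {A : Type} [Ring A] [Algebra ℂ A] {M M' : Type} [AddCommGroup M] [Module ℂ M]
    [Module A M] [IsScalarTower ℂ A M] [AddCommGroup M'] [Module ℂ M'] [Module A M']
    [IsScalarTower ℂ A M'] (x : Fin N → Fin N → A) (h : M →ₗ[A] M') (f : Fin N → Fin N → M) :
    E1 q x (tS (tS h) f) = tS (tS h) (E1 q x f) := by
  rw [E1, xm_nat, farN_2, ← E1]

theorem E2_nat {A : Type} [Ring A] [Algebra ℂ A] {M M' : Type} [AddCommGroup M] [Module ℂ M]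
    [Module A M] [IsScalarTower ℂ A M] [AddCommGroup M'] [Module ℂ M'] [Module A M']
    [IsScalarTower ℂ A M'] (x : Fin N → Fin N → A) (h : M →ₗ[A] M') (f : Fin N → Fin N → M) :
    E2 q x (tS (tS h) f) = tS (tS h) (E2 q x f) := by
  rw [E2, xm_nat, far_2, far_3, far, farU_2, ← h_csmul, ← E2]

theorem E1_apply {A : Type} [Ring A] [Algebra ℂ A] {M : Type} [AddCommGroup M] [Module ℂ M]
    [Module A M] [IsScalarTower ℂ A M] (x : Fin N → Fin N → A) (f : Fin N → Fin N → M)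
    (i j : Fin N) : E1 q x f i j = ∑ s : Fin N, pw q (2 - 2 * iv s) • (x i s • f s j) := by
  simp only [E1, tS_apply, tN_apply, xm, Finset.sum_apply, Pi.smul_apply]

theorem E2_apply {A : Type} [Ring A] [Algebra ℂ A] {M : Type} [AddCommGroup M] [Module ℂ M]
    [Module A M] [IsScalarTower ℂ A M] (hq : q ≠ 0) (x : Fin N → Fin N → A)
    (f : Fin N → Fin N → M) (i j : Fin N) : E2 q x f i j = (q : ℂ)⁻¹ •
      ∑ a : Fin N, ∑ b : Fin N, ∑ c : Fin N, ∑ s : Fin N, ∑ t : Fin N, ∑ u : Fin N, ∑ v : Fin N,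
        (Rlm q t u b c * Rminus q s b i a * Rc q c v a j) • (x s t • f u v) := by
  have hq' : (q : ℂ) ≠ 0 := by exact_mod_cast hq
  have h : pw q (-2) * (q : ℂ) = (q : ℂ)⁻¹ := by
    rw [pw, zpow_neg]; field_simp
  rw [E2, Pi.smul_apply, Pi.smul_apply, UPQC_apply q A hq, smul_smul, h]
  rfl

theorem pw_two_sub (hq : q ≠ 0) (m : ℤ) : pw q (2 - 2 * m) = (q : ℂ) ^ 2 * pw q (-2 * m) := by
  have hq' : (q : ℂ) ≠ 0 := by exact_mod_cast hq
  rw [pw, pw, ← zpow_natCast, ← zpow_add₀ hq']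
  congr 1; push_cast; ring

theorem rho'_eq (hq : q ≠ 0) (i j : Fin N) : rho' q ((q : ℂ) ^ 2) ((q : ℂ)⁻¹) i j
    = e q i j - E1 q (X q) (e q) i j - E2 q (X q) (e q) i j := by
  rw [E1_apply, E2_apply hq, rho']
  simp only [pw_two_sub hq, mul_smul, Finset.smul_sum]

theorem omHat_eq (hq : q ≠ 0) : tU (CPq q N) (E1 q (X q) (e q)) = (q : ℂ) ^ 2 • omHat q N := by
  rw [tU_apply, omHat]
  simp only [E1_apply, pw_two_sub hq, mul_smul, Finset.smul_sum]

/-- the submodule of relations -/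
abbrev relK (q : ℝ) (N : ℕ) : Submodule (CPq q N) (FMod q N) :=
  Submodule.span (CPq q N) {g : FMod q N | g = omHat q N ∨
    ∃ i j : Fin N, g = rho' q ((q : ℂ) ^ 2) ((q : ℂ)⁻¹) i j}

/-- the bimodule of one-forms -/
abbrev GG (q : ℝ) (N : ℕ) : Type := FMod q N ⧸ relK q N

/-- classes of the generators -/
def cl (q : ℝ) {N : ℕ} : Fin N → Fin N → GG q N := tS (tS (relK q N).mkQ) (e q)

theorem He_cl (hq : q ≠ 0) : He q (X q) (cl q (N := N)) where
  k1 := by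
    rw [cl, E1_nat, farU, omHat_eq hq, h_csmul]
    rw [Submodule.mkQ_apply, (Submodule.Quotient.mk_eq_zero _).2, smul_zero]
    exact Submodule.subset_span (Or.inl rfl)
  k2 := by
    rw [cl, E1_nat, E2_nat, ← map_add, ← sub_eq_zero, ← map_sub]
    funext i j
    change Submodule.Quotient.mk _ = _
    apply (Submodule.Quotient.mk_eq_zero _).2
    have : (e q - (E1 q (X q) (e q) + E2 q (X q) (e q)) : Fin N → Fin N → FMod q N) i j
      = rho' q ((q : ℂ) ^ 2) ((q : ℂ)⁻¹) i j := by
      rw [rho'_eq hq, sub_sub]; rfl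
    rw [this]
    exact Submodule.subset_span (Or.inr ⟨i, j, rfl⟩)

theorem exists_rho (hq : q ≠ 0) : ∃ ρ : GG q N →ₗ[CPq q N] (Fin N → Fin N → GG q N),
    tS (tS ρ) (E1 q (X q) (cl q)) = B1 q (X q) (cl q) ∧
    tS (tS ρ) (E2 q (X q) (cl q)) = B2 q (X q) (cl q) := by
  have hx : Hx q (CPq q N) (X q) := HxX hq
  have he : He q (X q) (cl q (N := N)) := He_cl hq
  set b1 := B1 q (X q) (cl q (N := N)) with hb1
  set b2 := B2 q (X q) (cl q (N := N)) with hb2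
  let r : FMod q N →ₗ[CPq q N] (Fin N → Fin N → GG q N) :=
    Fintype.linearCombination (CPq q N) (fun p : Fin N × Fin N => (b1 + b2) p.1 p.2)
  have hr : tS (tS r) (e q) = b1 + b2 := by
    funext i j
    change r (e q i j) = (b1 + b2) i j
    simp only [r, e]
    rw [Fintype.linearCombination_apply_single, one_smul]
  have r1 : tS (tS r) (E1 q (X q) (e q)) = b1 := by
    rw [← E1_nat, hr, E1_add, E1, E1, hb1, hb2, VA1 hx hq, VA2 hx hq he, add_zero]
  have r2 : tS (tS r) (E2 q (X q) (e q)) = b2 := by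
    rw [← E2_nat, hr, E2_add, E2, E2, hb1, hb2, VB1 hx hq he, VB2 hx hq he]
    have h0 : pw q (-2) • (0 : Fin N → Fin N → Fin N → Fin N → GG q N) = 0 := by
      funext i j k l; exact smul_zero (A := GG q N) (pw q (-2))
    exact (congrArg (fun z : Fin N → Fin N → Fin N → Fin N → GG q N => z + B2 q (X q) (cl q)) h0).trans (zero_add _)
  have hq' : (q : ℂ) ≠ 0 := by exact_mod_cast hq
  have hk : relK q N ≤ LinearMap.ker r := by
    rw [Submodule.span_le]
    rintro g (rfl | ⟨i, j, rfl⟩)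
    · have h0 : r ((q : ℂ) ^ 2 • omHat q N) = 0 := by
        rw [← omHat_eq hq, ← farU, r1, hb1, UB1 hx hq he]
      rw [h_csmul] at h0
      exact (smul_eq_zero.1 h0).resolve_left (pow_ne_zero _ hq')
    · rw [SetLike.mem_coe, LinearMap.mem_ker, rho'_eq hq, map_sub, map_sub]
      have a0 := congrFun (congrFun hr i) j
      have a1 := congrFun (congrFun r1 i) j
      have a2 := congrFun (congrFun r2 i) j
      simp only [tS_apply] at a0 a1 a2
      rw [a0, a1, a2, Pi.add_apply, Pi.add_apply]; abel
  refine ⟨(relK q N).liftQ r hk, ?_, ?_⟩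
  · rw [cl, E1_nat, ← r1]; rfl
  · rw [cl, E2_nat, ← r2]; rfl

theorem mkQ_eq (f : FMod q N) : (relK q N).mkQ f
    = ∑ p : Fin N × Fin N, f p • cl q p.1 p.2 := by
  have : f = ∑ p : Fin N × Fin N, f p • e q p.1 p.2 := by
    simp only [e]
    funext p
    simp [Finset.sum_apply, Pi.single_apply]
  conv_lhs => rw [this]
  simp only [map_sum, map_smul, cl, tS_apply]

theorem span_cl : Submodule.span (CPq q N)
    (Set.range fun p : Fin N × Fin N => cl q p.1 p.2) = ⊤ := by
  rw [eq_top_iff]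
  intro g _
  obtain ⟨f, rfl⟩ := Submodule.mkQ_surjective _ g
  rw [mkQ_eq]
  exact Submodule.sum_mem _ fun p _ => Submodule.smul_mem _ _ (Submodule.subset_span ⟨p, rfl⟩)

theorem B1_apply {G : Type} [AddCommGroup G] [Module ℂ G] [Module (CPq q N) G]
    [IsScalarTower ℂ (CPq q N) G] (hq : q ≠ 0) (g : Fin N → Fin N → G) (i j k l : Fin N) :
    B1 q (X q) g i j k l = pw q 3 • (∑ s : Fin N, ∑ t : Fin N, ∑ u : Fin N, ∑ v : Fin N,
      ∑ w : Fin N, (pw q (-2 * iv w) * RCPc q s t u v i j k l) •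
        ((X q s t * X q u w) • g w v)) := by
  have hq' : (q : ℂ) ≠ 0 := by exact_mod_cast hq
  have h : pw q 2 * (q : ℂ)⁻¹ * (q : ℂ) ^ 2 = pw q 3 := by
    rw [pw, pw]; norm_cast; field_simp
  rw [B1, Pi.smul_apply, Pi.smul_apply, Pi.smul_apply, Pi.smul_apply, DQC_apply q _ hq, ← h]
  simp only [xm, Pi.smul_apply, E1_apply, pw_two_sub hq, Finset.smul_sum]
  refine Finset.sum_congr rfl fun s _ => Finset.sum_congr rfl fun t _ =>
    Finset.sum_congr rfl fun u _ => Finset.sum_congr rfl fun v _ => Finset.sum_congr rfl fun w _ => ?_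
  rw [mul_smul (X q s t), smul_comm (X q s t)]
  simp only [smul_smul]
  congr 1
  ring

theorem sum_seven {M : Type} [AddCommMonoid M] (F : Fin N → Fin N → Fin N → Fin N → Fin N → Fin N →
    Fin N → Fin N → M) :
    ∑ w, ∑ a, ∑ b, ∑ c, ∑ s, ∑ t, ∑ u, ∑ v, F w a b c s t u v
    = ∑ a, ∑ b, ∑ c, ∑ s, ∑ t, ∑ u, ∑ v, ∑ w, F w a b c s t u v := by
  rw [Finset.sum_comm]; refine Finset.sum_congr rfl fun a _ => ?_
  rw [Finset.sum_comm]; refine Finset.sum_congr rfl fun b _ => ?_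
  rw [Finset.sum_comm]; refine Finset.sum_congr rfl fun c _ => ?_
  rw [Finset.sum_comm]; refine Finset.sum_congr rfl fun s _ => ?_
  rw [Finset.sum_comm]; refine Finset.sum_congr rfl fun t _ => ?_
  rw [Finset.sum_comm]; refine Finset.sum_congr rfl fun u _ => ?_
  rw [Finset.sum_comm]

theorem sum_four {M : Type} [AddCommMonoid M] (F : Fin N → Fin N → Fin N → Fin N → M) :
    ∑ x, ∑ y, ∑ z, ∑ w, F x y z w = ∑ w, ∑ x, ∑ y, ∑ z, F x y z w := by
  symm
  rw [Finset.sum_comm]; refine Finset.sum_congr rfl fun x _ => ?_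
  rw [Finset.sum_comm]; refine Finset.sum_congr rfl fun y _ => ?_
  rw [Finset.sum_comm]

theorem sum_eleven {M : Type} [AddCommMonoid M] (F : Fin N → Fin N → Fin N → Fin N → Fin N → Fin N →
    Fin N → Fin N → Fin N → Fin N → Fin N → M) :
    ∑ x, ∑ y, ∑ z, ∑ w, ∑ a, ∑ b, ∑ c, ∑ s, ∑ t, ∑ u, ∑ v, F x y z w a b c s t u v
    = ∑ a, ∑ b, ∑ c, ∑ s, ∑ t, ∑ u, ∑ v, ∑ w, ∑ x, ∑ y, ∑ z, F x y z w a b c s t u v := by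
  have h1 : ∀ x y z, ∑ w, ∑ a, ∑ b, ∑ c, ∑ s, ∑ t, ∑ u, ∑ v, F x y z w a b c s t u v
      = ∑ a, ∑ b, ∑ c, ∑ s, ∑ t, ∑ u, ∑ v, ∑ w, F x y z w a b c s t u v :=
    fun x y z => sum_seven (F x y z)
  have h2 : ∀ x y, ∑ z, ∑ a, ∑ b, ∑ c, ∑ s, ∑ t, ∑ u, ∑ v, ∑ w, F x y z w a b c s t u v
      = ∑ a, ∑ b, ∑ c, ∑ s, ∑ t, ∑ u, ∑ v, ∑ z, ∑ w, F x y z w a b c s t u v :=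
    fun x y => sum_seven (fun z a b c s t u v => ∑ w, F x y z w a b c s t u v)
  have h3 : ∀ x, ∑ y, ∑ a, ∑ b, ∑ c, ∑ s, ∑ t, ∑ u, ∑ v, ∑ z, ∑ w, F x y z w a b c s t u v
      = ∑ a, ∑ b, ∑ c, ∑ s, ∑ t, ∑ u, ∑ v, ∑ y, ∑ z, ∑ w, F x y z w a b c s t u v :=
    fun x => sum_seven (fun y a b c s t u v => ∑ z, ∑ w, F x y z w a b c s t u v)
  have h4 : ∑ x, ∑ a, ∑ b, ∑ c, ∑ s, ∑ t, ∑ u, ∑ v, ∑ y, ∑ z, ∑ w, F x y z w a b c s t u v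
      = ∑ a, ∑ b, ∑ c, ∑ s, ∑ t, ∑ u, ∑ v, ∑ x, ∑ y, ∑ z, ∑ w, F x y z w a b c s t u v :=
    sum_seven (fun x a b c s t u v => ∑ y, ∑ z, ∑ w, F x y z w a b c s t u v)
  have h5 : ∀ a b c s t u v, ∑ x, ∑ y, ∑ z, ∑ w, F x y z w a b c s t u v
      = ∑ w, ∑ x, ∑ y, ∑ z, F x y z w a b c s t u v :=
    fun a b c s t u v => sum_four (fun x y z w => F x y z w a b c s t u v)
  simp_rw [h1, h2, h3]
  rw [h4]
  simp_rw [h5]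

theorem sum_push {A : Type} [Ring A] {M : Type} [AddCommGroup M] [Module ℂ M] [Module A M]
    (r : ℂ) (x : A) (F : Fin N → Fin N → Fin N → Fin N → Fin N → Fin N → Fin N → M) :
    r • x • ∑ a, ∑ b, ∑ c, ∑ s, ∑ t, ∑ u, ∑ v, F a b c s t u v
    = ∑ a, ∑ b, ∑ c, ∑ s, ∑ t, ∑ u, ∑ v, r • x • F a b c s t u v := by
  let h : M →+ M := (DistribSMul.toAddMonoidHom M r).comp (DistribSMul.toAddMonoidHom M x)
  have hh : ∀ m, r • x • m = h m := fun _ => rfl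
  simp only [hh, map_sum]

theorem B2_apply {G : Type} [AddCommGroup G] [Module ℂ G] [Module (CPq q N) G]
    [IsScalarTower ℂ (CPq q N) G] (hq : q ≠ 0) (g : Fin N → Fin N → G) (i j k l : Fin N) :
    B2 q (X q) g i j k l = pw q (-2) • (∑ a : Fin N, ∑ b : Fin N, ∑ c : Fin N, ∑ s : Fin N,
      ∑ t : Fin N, ∑ u : Fin N, ∑ v : Fin N, ∑ w : Fin N, ∑ x' : Fin N, ∑ y : Fin N, ∑ z : Fin N,
      (RCPm q x' y z w i j k l * Rlm q t u b c * Rminus q s b z a * Rc q c v a w) •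
        ((X q x' y * X q s t) • g u v)) := by
  have hq' : (q : ℂ) ≠ 0 := by exact_mod_cast hq
  rw [B2, Pi.smul_apply, Pi.smul_apply, Pi.smul_apply, Pi.smul_apply, DPC_apply q _ hq]
  congr 1
  have h : ∀ x y z w : Fin N, RCPm q x y z w i j k l • (X q x y • E2 q (X q) g z w)
      = (q : ℂ)⁻¹ • ∑ a : Fin N, ∑ b : Fin N, ∑ c : Fin N, ∑ s : Fin N, ∑ t : Fin N, ∑ u : Fin N,
        ∑ v : Fin N, (RCPm q x y z w i j k l * Rlm q t u b c * Rminus q s b z a * Rc q c v a w) •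
        ((X q x y * X q s t) • g u v) := by
    intro x y z w
    rw [E2_apply hq, smul_comm (X q x y), smul_comm (RCPm q x y z w i j k l)]
    congr 1
    rw [sum_push]
    refine Finset.sum_congr rfl fun a _ => Finset.sum_congr rfl fun b _ =>
      Finset.sum_congr rfl fun c _ => Finset.sum_congr rfl fun s _ =>
      Finset.sum_congr rfl fun t _ => Finset.sum_congr rfl fun u _ =>
      Finset.sum_congr rfl fun v _ => ?_
    rw [mul_smul (X q x y), smul_comm (X q x y)]
    simp only [smul_smul, mul_assoc]
  simp only [xm, Pi.smul_apply, h]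
  simp only [← Finset.smul_sum]
  rw [smul_smul, mul_inv_cancel₀ hq', one_smul, sum_eleven]

end Final
section Nat
variable {N : ℕ} {q : ℝ} {A : Type} [Ring A] [Algebra ℂ A] {M M' : Type} [AddCommGroup M]
  [Module ℂ M] [Module A M] [IsScalarTower ℂ A M] [AddCommGroup M'] [Module ℂ M'] [Module A M']
  [IsScalarTower ℂ A M']

theorem B1_nat (x : Fin N → Fin N → A) (h : M →ₗ[A] M') (f : Fin N → Fin N → M) :
    B1 q x (tS (tS h) f) = tS (tS (tS (tS h))) (B1 q x f) := by
  rw [B1, E1_nat, xm_nat, far_2, far_3, far_2, ← h_csmul, ← B1]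

theorem B2_nat (x : Fin N → Fin N → A) (h : M →ₗ[A] M') (f : Fin N → Fin N → M) :
    B2 q x (tS (tS h) f) = tS (tS (tS (tS h))) (B2 q x f) := by
  rw [B2, E2_nat, xm_nat, far_2, far, far_2, ← h_csmul, ← B2]

end Nat

/-- existence of the restricted calculus `Γ̃̃` on `CP_q^{N-1}`. -/
theorem statement10 (q : ℝ) (hq0 : q ≠ 0) (hq1 : q ≠ 1) (hq2 : q ≠ -1) (N : ℕ) (hN : 2 ≤ N) :
    ∃ D : FODC (CPq q N),
      Function.Surjective (piMap q D) ∧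
      (∀ f : FMod q N, piMap q D f = 0 ↔
        f ∈ Submodule.span (CPq q N) {g : FMod q N | g = omHat q N ∨ ∃ i j : Fin N, g = rho' q ((q : ℂ) ^ 2) ((q : ℂ)⁻¹) i j}) ∧
      om q D = 0 ∧
      (∀ i j k l : Fin N,
        MulOpposite.op (X q k l) • D.d (X q i j) =
        pw q (-2) • (∑ a : Fin N, ∑ b : Fin N, ∑ c : Fin N, ∑ s : Fin N, ∑ t : Fin N, ∑ u : Fin N, ∑ v : Fin N, ∑ w : Fin N, ∑ x' : Fin N, ∑ y : Fin N, ∑ z : Fin N, (RCPm q x' y z w i j k l * Rlm q t u b c * Rminus q s b z a * Rc q c v a w) • ((X q x' y * X q s t) • D.d (X q u v)))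
        + pw q 3 • (∑ s : Fin N, ∑ t : Fin N, ∑ u : Fin N, ∑ v : Fin N, ∑ w : Fin N, (pw q (-2 * iv w) * RCPc q s t u v i j k l) • ((X q s t * X q u w) • D.d (X q w v)))) := by
  obtain ⟨ρ, h1, h2⟩ := exists_rho (N := N) hq0
  obtain ⟨D, φ, hd, hr⟩ := mkFODC hq0 (cl q) (He_cl hq0) span_cl ρ h1 h2
  have hpi : ∀ f : FMod q N, piMap q D f = φ ((relK q N).mkQ f) := by
    intro f
    rw [mkQ_eq, map_sum]
    simp only [piMap, hd, map_smul]
  refine ⟨D, ?_, ?_, ?_, ?_⟩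
  · intro g
    obtain ⟨f, hf⟩ := (relK q N).mkQ_surjective (φ.symm g)
    exact ⟨f, by rw [hpi, hf, LinearEquiv.apply_symm_apply]⟩
  · intro f
    rw [hpi, LinearEquiv.map_eq_zero_iff]
    exact Submodule.Quotient.mk_eq_zero _
  · have h0 : om q D = φ ((relK q N).mkQ (omHat q N)) := by
      have hc : ∀ (c : ℂ) (g : GG q N), φ (c • g) = c • φ g :=
        fun c g => LinearMap.map_smul_of_tower φ.toLinearMap c g
      simp only [om, omHat, map_sum, h_csmul, map_smul, hc, hd]
      rfl
    rw [h0, Submodule.mkQ_apply, (Submodule.Quotient.mk_eq_zero _).2, map_zero]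
    exact Submodule.subset_span (Or.inl rfl)
  · intro i j k l
    have hg : (fun i j => D.d (X q i j)) = tS (tS φ.toLinearMap) (cl q) := by
      funext i j; exact hd i j
    have e1 := B1_apply hq0 (fun i j => D.d (X q i j)) i j k l
    have e2 := B2_apply hq0 (fun i j => D.d (X q i j)) i j k l
    rw [← e1, ← e2, hg, B1_nat, B2_nat, hr, add_comm]
    exact map_add φ _ _
end
end

section
/- Let (Γ,d) be a first order differential calculus on CP_q^{N−1} in which, for all 1 ≤ i,j ≤ N, d x_ij = q² Σ_s q^{−2s} x_is d x_sj + q⁻¹ Σ_{a,b,c,s,t,u,v} Rlm^{tu}_{bc} R⁻^{sb}_{ia} Rc^{cv}_{aj} x_st d x_uv − (s''+/s'+) x_ij ⍵ − (1/s'+) q^{2j} δ_ij ⍵, and whose bimodule structure is given for all i,j,k,l by d x_ij·x_kl = q^{−2} Σ_{a,b,c,s,t,u,v,w,x,y,z} RCPm^{xyzw}_{ijkl} Rlm^{tu}_{bc} R⁻^{sb}_{za} Rc^{cv}_{aw} x_xy x_st d x_uv + q³ Σ_{s,t,u,v,w} q^{−2w} RCPc^{stuv}_{ijkl} x_st x_uw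 d x_wv − (q^{2N+2}/s'+) δ_jk x_ij ⍵ − (q⁻¹/s'+) Σ_{a,b,c,s,v} Rr^{ab}_{jk} R⁻^{sc}_{ia} Rc^{cv}_{bl} x_sv ⍵ − (q^{−2}/s'+) q^{2j} δ_ij x_kl ⍵ − (q^{−2} s''''+/s'+) x_ij x_kl ⍵. Let Λ ⊆ Γ be the sub-bimodule generated by ⍵, let p : Γ → Γ/Λ be the quotient map, and set d' := p∘d. Then (Γ/Λ, d') is a first order differential calculus on CP_q^{N−1} in which Σ_{i,j} q^{−2j} x_ij d'x_ji = 0, d'x_ij = q² Σ_s q^{−2s} x_is d'x_sj + q⁻¹ Σ_{a,b,c,s,t,u,v} Rlm^{tu}_{bc} R⁻^{sb}_{ia} Rc^{cv}_{aj} x_st d'x_uv, and d'x_ij·x_kl = q^{−2} Σ_{a,b,c,s,t,u,v,w,x,y,z} RCPm^{xyzw}_{ijkl} Rlm^{tu}_{bc} R⁻^{sb}_{za} Rc^{cv}_{aw} x_xy x_st d'x_uv + q³ Σ_{s,t,u,v,w} q^{−2w} RCPc^{stuv}_{ijkl} x_st x_uw d'x_wv. -/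
open scoped BigOperators

noncomputable section

/-- the module structure on the quotient of a module by a stable subspace -/
@[reducible] def quotModule {R G : Type} [Ring R] [Algebra ℂ R] [AddCommGroup G] [Module ℂ G]
    [Module R G] [IsScalarTower ℂ R G] (L : Submodule ℂ G)
    (h : ∀ (r : R), ∀ g ∈ L, r • g ∈ L) : Module R (G ⧸ L) :=
  letI : SMul R (G ⧸ L) :=
    ⟨fun r => L.mapQ L (Algebra.lsmul ℂ ℂ G r) (fun g hg => h r g hg)⟩
  Function.Surjective.module R L.mkQ.toAddMonoidHom L.mkQ_surjective (fun _ _ => rfl)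

/-- any calculus can be factored by the sub-bimodule generated by a single form -/
theorem exists_quot {A : Type} [Ring A] [Algebra ℂ A] (D : FODC A) (w : D.Γ) :
    ∃ (D' : FODC A) (p : D.Γ → D'.Γ),
      (∀ g h : D.Γ, p (g + h) = p g + p h) ∧
      (∀ (z : ℂ) (g : D.Γ), p (z • g) = z • p g) ∧
      (∀ (a : A) (g : D.Γ), p (a • g) = a • p g) ∧
      (∀ (a : A) (g : D.Γ), p (MulOpposite.op a • g) = MulOpposite.op a • p g) ∧
      Function.Surjective p ∧
      (∀ g : D.Γ, p g = 0 ↔ g ∈ Submodule.span ℂ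
        {z : D.Γ | ∃ a b : A, ∃ s0 ∈ ({w} : Set D.Γ), z = a • MulOpposite.op b • s0}) ∧
      (∀ a : A, D'.d a = p (D.d a)) := by
  set L : Submodule ℂ D.Γ := Submodule.span ℂ
        {z : D.Γ | ∃ a b : A, ∃ s0 ∈ ({w} : Set D.Γ), z = a • MulOpposite.op b • s0} with hL
  have hl : ∀ (r : A), ∀ g ∈ L, r • g ∈ L := by
    intro r g hg
    have : L ≤ L.comap (Algebra.lsmul ℂ ℂ D.Γ r) := by
      rw [hL, Submodule.span_le]
      rintro _ ⟨a, b, s0, hs, rfl⟩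
      exact Submodule.subset_span ⟨r * a, b, s0, hs, by simp [mul_smul]⟩
    exact this hg
  have hr : ∀ (r : Aᵐᵒᵖ), ∀ g ∈ L, r • g ∈ L := by
    intro r g hg
    have : L ≤ L.comap (Algebra.lsmul ℂ ℂ D.Γ r) := by
      rw [hL, Submodule.span_le]
      rintro _ ⟨a, b, s0, hs, rfl⟩
      refine Submodule.subset_span ⟨a, b * r.unop, s0, hs, ?_⟩
      simp [mul_smul]
      exact (smul_comm a r _).symm
    exact this hg
  letI mA : Module A (D.Γ ⧸ L) := quotModule L hl
  letI mB : Module Aᵐᵒᵖ (D.Γ ⧸ L) := quotModule L hr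
  have pA : ∀ (a : A) (g : D.Γ), L.mkQ (a • g) = a • L.mkQ g := fun _ _ => rfl
  have pB : ∀ (a : Aᵐᵒᵖ) (g : D.Γ), L.mkQ (a • g) = a • L.mkQ g := fun _ _ => rfl
  haveI : SMulCommClass A Aᵐᵒᵖ (D.Γ ⧸ L) := ⟨fun a b x => by
    obtain ⟨g, rfl⟩ := L.mkQ_surjective x
    rw [← pB, ← pA, ← pA, ← pB, smul_comm]⟩
  haveI : IsScalarTower ℂ A (D.Γ ⧸ L) := ⟨fun a b x => by
    obtain ⟨g, rfl⟩ := L.mkQ_surjective x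
    rw [← pA, ← pA, ← map_smul, smul_assoc]⟩
  haveI : IsScalarTower ℂ Aᵐᵒᵖ (D.Γ ⧸ L) := ⟨fun a b x => by
    obtain ⟨g, rfl⟩ := L.mkQ_surjective x
    rw [← pB, ← pB, ← map_smul, smul_assoc]⟩
  refine ⟨{ Γ := D.Γ ⧸ L
            d := fun a => L.mkQ (D.d a)
            d_add := fun a b => by rw [D.d_add, map_add]
            d_smul := fun a b => by rw [D.d_smul, map_smul]
            leibniz := fun a b => by rw [D.leibniz, map_add, pA, pB]
            spanning := ?_ }, L.mkQ, fun _ _ => map_add _ _ _, fun _ _ => map_smul _ _ _, pA,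
            fun a g => pB _ g, L.mkQ_surjective, fun g => ?_, fun _ => rfl⟩
  · have h := congrArg (Submodule.map L.mkQ) D.spanning
    rw [Submodule.map_top, Submodule.range_mkQ, Submodule.map_span] at h
    rw [← h]
    congr 1
    ext z
    constructor
    · rintro ⟨a, b, rfl⟩
      exact ⟨a • D.d b, ⟨a, b, rfl⟩, rfl⟩
    · rintro ⟨_, ⟨a, b, rfl⟩, rfl⟩
      exact ⟨a, b, rfl⟩
  · exact Submodule.Quotient.mk_eq_zero L

/-- factorising the calculus `Γ̃` by the sub-bimodule generated by `⍵` yields `Γ̃̃`. -/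
theorem statement12 (q : ℝ) (hq0 : q ≠ 0) (hq1 : q ≠ 1) (hq2 : q ≠ -1) (N : ℕ) (hN : 2 ≤ N) (D : FODC (CPq q N))
    (hrel : ∀ i j : Fin N, D.d (X q i j) =
      (q : ℂ) ^ 2 • (∑ s : Fin N, pw q (-2 * iv s) • (X q i s • D.d (X q s j)))
        + (q : ℂ)⁻¹ • (∑ a : Fin N, ∑ b : Fin N, ∑ c : Fin N, ∑ s : Fin N, ∑ t : Fin N, ∑ u : Fin N, ∑ v : Fin N, (Rlm q t u b c * Rminus q s b i a * Rc q c v a j) • (X q s t • D.d (X q u v)))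
        - (s2P q N / s1P q N) • (X q i j • om q D)
        - ((1 / s1P q N) * pw q (2 * iv j) * kd i j) • om q D)
    (hbim : ∀ i j k l : Fin N,
      MulOpposite.op (X q k l) • D.d (X q i j) =
      pw q (-2) • (∑ a : Fin N, ∑ b : Fin N, ∑ c : Fin N, ∑ s : Fin N, ∑ t : Fin N, ∑ u : Fin N, ∑ v : Fin N, ∑ w : Fin N, ∑ x' : Fin N, ∑ y : Fin N, ∑ z : Fin N, (RCPm q x' y z w i j k l * Rlm q t u b c * Rminus q s b z a * Rc q c v a w) • ((X q x' y * X q s t) • D.d (X q u v)))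
        + pw q 3 • (∑ s : Fin N, ∑ t : Fin N, ∑ u : Fin N, ∑ v : Fin N, ∑ w : Fin N, (pw q (-2 * iv w) * RCPc q s t u v i j k l) • ((X q s t * X q u w) • D.d (X q w v)))
        - ((pw q (2 * (N : ℤ) + 2) / s1P q N) * kd j k) • (X q i j • om q D)
        - (pw q (-1) / s1P q N) • (∑ a : Fin N, ∑ b : Fin N, ∑ c : Fin N, ∑ s : Fin N, ∑ v : Fin N, (Rr q a b j k * Rminus q s c i a * Rc q c v b l) • (X q s v • om q D))
        - ((pw q (-2) / s1P q N) * pw q (2 * iv j) * kd i j) • (X q k l • om q D)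
        - (pw q (-2) * s4P q N / s1P q N) • ((X q i j * X q k l) • om q D)) :
    ∃ (D' : FODC (CPq q N)) (p : D.Γ → D'.Γ),
      (∀ g h : D.Γ, p (g + h) = p g + p h) ∧
      (∀ (z : ℂ) (g : D.Γ), p (z • g) = z • p g) ∧
      (∀ (a : CPq q N) (g : D.Γ), p (a • g) = a • p g) ∧
      (∀ (a : CPq q N) (g : D.Γ), p (MulOpposite.op a • g) = MulOpposite.op a • p g) ∧
      Function.Surjective p ∧
      (∀ g : D.Γ, p g = 0 ↔ g ∈ Submodule.span ℂ
        {z : D.Γ | ∃ a b : CPq q N, ∃ s0 ∈ ({om q D} : Set D.Γ), z = a • MulOpposite.op b • s0}) ∧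
      (∀ a : CPq q N, D'.d a = p (D.d a)) ∧
      om q D' = 0 ∧
      (∀ i j : Fin N, D'.d (X q i j) =
        (q : ℂ) ^ 2 • (∑ s : Fin N, pw q (-2 * iv s) • (X q i s • D'.d (X q s j)))
        + (q : ℂ)⁻¹ • (∑ a : Fin N, ∑ b : Fin N, ∑ c : Fin N, ∑ s : Fin N, ∑ t : Fin N, ∑ u : Fin N, ∑ v : Fin N, (Rlm q t u b c * Rminus q s b i a * Rc q c v a j) • (X q s t • D'.d (X q u v)))) ∧
      (∀ i j k l : Fin N, MulOpposite.op (X q k l) • D'.d (X q i j) =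
        pw q (-2) • (∑ a : Fin N, ∑ b : Fin N, ∑ c : Fin N, ∑ s : Fin N, ∑ t : Fin N, ∑ u : Fin N, ∑ v : Fin N, ∑ w : Fin N, ∑ x' : Fin N, ∑ y : Fin N, ∑ z : Fin N, (RCPm q x' y z w i j k l * Rlm q t u b c * Rminus q s b z a * Rc q c v a w) • ((X q x' y * X q s t) • D'.d (X q u v)))
        + pw q 3 • (∑ s : Fin N, ∑ t : Fin N, ∑ u : Fin N, ∑ v : Fin N, ∑ w : Fin N, (pw q (-2 * iv w) * RCPc q s t u v i j k l) • ((X q s t * X q u w) • D'.d (X q w v)))) := by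
  obtain ⟨D', p, padd, psmul, pA, pB, psurj, pker, pd⟩ := exists_quot D (om q D)
  have p0 : p (om q D) = 0 := (pker _).2
    (Submodule.subset_span ⟨1, 1, om q D, rfl, by simp⟩)
  let P : D.Γ →ₗ[ℂ] D'.Γ := { toFun := p, map_add' := padd, map_smul' := psmul }
  have hP : ∀ g, p g = P g := fun _ => rfl
  have PA : ∀ (a : CPq q N) (g : D.Γ), P (a • g) = a • P g := pA
  have PB : ∀ (a : CPq q N) (g : D.Γ), P (MulOpposite.op a • g) = MulOpposite.op a • P g := pB
  have P0 : P (om q D) = 0 := p0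
  have Pd : ∀ a, D'.d a = P (D.d a) := pd
  refine ⟨D', p, padd, psmul, pA, pB, psurj, pker, pd, ?_, ?_, ?_⟩
  · rw [← P0]
    simp only [om, Pd, map_sum, map_smul, PA]
  · intro i j
    have h := congrArg P (hrel i j)
    simp only [map_add, map_sub, map_smul, map_sum, PA, P0, smul_zero, sub_zero] at h
    simp only [Pd]
    exact h
  · intro i j k l
    have h := congrArg P (hbim i j k l)
    simp only [map_add, map_sub, map_smul, map_sum, PA, PB, P0, smul_zero, sub_zero,
      Finset.sum_const_zero] at h
    simp only [Pd]
    exact h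
end
end
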